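/- Let σ_I, σ_E : ℝ^{19} → ℝ be smooth and suppose there exist constants γ_I > γ_v > 0 and M > 0 such that (h₁): ∇²σ_I ≥ γ_I·Id > γ_v·Id ≥ ∇²(σ_I − σ_E) > 0 everywhere, and (h₂): |∇²σ_E| ≤ M and |∇³σ_E| ≤ M everywhere; assume also ∇(σ_I−σ_E) : ℝ^{19} → ℝ^{19} is onto, and let Ψ(Ξ,τ) = σ_I(Ξ) + Ξ·τ + G(τ) with G the convex function satisfying ∇G(τ) = −(∇Σ)⁻¹(−τ), Σ := σ_I − σ_E, normalized so that Ψ(Ξ, −∇Σ(Ξ)) = σ_E(Ξ). For ε > 0 let (v^ε, F^ε, T^ε) with F^ε = ∇y^ε be a smooth solution on ℝ³ × [0,T], decaying fast as |x| → ∞, of the stress relaxation system ∂_t v^ε_i = ∂_α(T^{ε,A} ∂Φ^A/∂F_{iα}(F^ε)), ∂_t F^ε_{iα} = ∂_α v^ε_i, ∂_t(T^{ε,A} − ∂σ_I/∂Ξ^A(Φ(F^ε))) = −(1/ε)(T^{ε,A} − ∂σ_E/∂Ξ^A(Φ(F^ε))), with the initial energy ∫ ½|v^ε_0|² + Ψ(Φ(F^ε_0),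 τ^ε_0) dx bounded uniformly in ε; and let (v̂, F̂) with F̂ = ∇ŷ be a smooth solution on ℝ³ × [0,T] of polyconvex elastodynamics ∂_t v̂_i = ∂_α( ∂σ_E/∂Ξ^A(Φ(F̂)) ∂Φ^A/∂F_{iα}(F̂) ), ∂_t F̂_{iα} = ∂_α v̂_i, decaying fast as |x| → ∞. Set τ^ε := T^ε − ∇_Ξ σ_I(Φ(F^ε)), τ_∞(F̂) := ∇_Ξ(σ_E − σ_I)(Φ(F̂)), and the relative energy e_r := ½|v^ε − v̂|² + Ψ(Φ(F^ε), τ^ε) − σ_E(Φ(F̂)) − ∂σ_E/∂Ξ^A(Φ(F̂))(Φ^A(F^ε) − Φ^A(F̂)). Then there exists a constant C > 0 depending on T, γ_I, γ_v, M and the sup-norms of ∇v̂ and ∇F̂, but not on ε, such that for all t ∈ [0,T]: ∫_{ℝ³} e_r(x,t) dx ≤ C ( ∫_{ℝ³} e_r(x,0) dx + ε ). In particular, if ∫ e_r(x,0) dx → 0 as ε → 0, then sup_{t∈[0,T]} ∫_{ℝ³} |v^ε − v̂|² + |F^ε − F̂|² + |τ^ε − τ_∞(F̂)|² dx → 0 as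 ε → 0. -/

import Mathlib

/-!
The proof is a relative entropy argument. Write `Σ = σ_I - σ_E`. Since `∇Σ(-∇G(τ)) = -τ`, the
function `G` is a Legendre-type transform of `Σ`, and `Ψ(Ξ, τ) - σ_E(Ξ)` is the Bregman distance of
`Σ` between `Ξ` and `-∇G(τ)`. As `0 < ∇²Σ ≤ γᵥ`, co-coercivity of the gradient
(`bregman_ge_grad`) bounds this distance from below by the squared distance to equilibrium
`|τ + ∇Σ(Ξ)|²` (`psi_lower`), and bounds the entropy production in the same way (`dissipation`).
Moreover `∇²σ_E ≥ γ_I - γᵥ`, so the relative energy controls `|v - v̂|²`, `|Φ(F) - Φ(F̂)|²` and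
`|τ + ∇Σ(Φ(F))|²` (`exists_coercive`).

The Piola identity (`piola`) and the transport equation `∂ₜΦ^A(F) = ∂Φ^A/∂F_{iα} ∂_α vᵢ` turn the
time derivative of the relative energy into the divergence of a flux, minus the entropy production
divided by `ε`, plus error terms (`balance_algebra`). All error terms but one are quadratic in the
quantities controlled by the relative energy. Here it matters that increments of `∂Φ/∂F` are
controlled by increments of `Φ` (`dPhi_sub_le`), and that `∇²σ_E` and `∇³σ_E` are bounded. The
remaining term is linear in the distance to equilibrium and carries the factor `∇v̂`. Young's
inequality absorbs it into the entropy production at the cost of a term `ε g(x)`, where `g` has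
compact support because `∇v̂` has (`absorb`, `balance`). At rest the equilibrium stress vanishes
(`rest_stress`), so the relative energy has compact support in space, and Gronwall's inequality
(`gronwall_density`) gives the stability estimate. Convergence then follows from coercivity and the
Lipschitz bound on `∇Σ` (`tau_sub_le`).
-/

open MeasureTheory

noncomputable section

/-- Matrices as `Fin 3 → Fin 3 → ℝ`. -/
abbrev Mat3 : Type := Fin 3 → Fin 3 → ℝ

/-- The Levi-Civita symbol on `Fin 3`. -/
def lev (i j k : Fin 3) : ℝ :=
  (((j : ℕ) : ℝ) - ((i : ℕ) : ℝ)) * (((k : ℕ) : ℝ) - ((i : ℕ) : ℝ)) *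
    (((k : ℕ) : ℝ) - ((j : ℕ) : ℝ)) / 2

/-- The cofactor matrix `(cof M)_{iα} = ½ ε_{ijk} ε_{αβγ} M_{jβ} M_{kγ}`. -/
def cof3 (M : Mat3) : Mat3 := fun i α =>
  (1 / 2) * ∑ j, ∑ k, ∑ β, ∑ γ, lev i j k * lev α β γ * M j β * M k γ

/-- The determinant of a `3×3` matrix. -/
def det3 (M : Mat3) : ℝ := Matrix.det (Matrix.of M)

/-- Index set for the `19` null-Lagrangian components `(F, cof F, det F)`. -/
abbrev Idx19 : Type := (Fin 3 × Fin 3) ⊕ ((Fin 3 × Fin 3) ⊕ Unit)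

/-- The null Lagrangians `Φ(F) = (F, cof F, det F) ∈ ℝ^{19}`. -/
def Phi (M : Mat3) : Idx19 → ℝ
  | Sum.inl (i, α) => M i α
  | Sum.inr (Sum.inl (i, α)) => cof3 M i α
  | Sum.inr (Sum.inr _) => det3 M

/-- `∂Φ^A/∂F_{iα}(M)`. -/
def dPhi (M : Mat3) (A : Idx19) (i α : Fin 3) : ℝ :=
  fderiv ℝ (fun N : Mat3 => Phi N A) M (Pi.single i (Pi.single α 1))

/-- Partial derivative `∂σ/∂Ξ^A` of a function on `ℝ^{19}`. -/
def pd (σ : (Idx19 → ℝ) → ℝ) (X : Idx19 → ℝ) (A : Idx19) : ℝ :=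
  fderiv ℝ σ X (Pi.single A 1)

/-- Hessian of `σ` at `X` as a bilinear form, evaluated at `(Y, Z)`. -/
def hessB (σ : (Idx19 → ℝ) → ℝ) (X Y Z : Idx19 → ℝ) : ℝ :=
  fderiv ℝ (fun X' => fderiv ℝ σ X' Z) X Y

/-- Hessian quadratic form of `σ` at `X` evaluated at `Y`. -/
def hessQ (σ : (Idx19 → ℝ) → ℝ) (X Y : Idx19 → ℝ) : ℝ := hessB σ X Y Y

/-- Third derivative of `σ` at `X` as a trilinear form. -/
def d3B (σ : (Idx19 → ℝ) → ℝ) (X Y Z W : Idx19 → ℝ) : ℝ :=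
  fderiv ℝ (fun X' => fderiv ℝ (fun X'' => fderiv ℝ σ X'' W) X' Z) X Y

/-! ### Taylor expansion and Bregman distances -/

/-- Second-order Taylor expansion on `[0,1]` with a lower bound on the second derivative. -/
lemma taylor_two_lower {f f' f'' : ℝ → ℝ} {m : ℝ} (h1 : ∀ s, HasDerivAt f (f' s) s)
    (h2 : ∀ s, HasDerivAt f' (f'' s) s) (hm : ∀ s, m ≤ f'' s) :
    m / 2 ≤ f 1 - f 0 - f' 0 := by
  have hmono : Monotone (fun s => f' s - m * s) := by
    apply monotone_of_hasDerivAt_nonneg (f' := fun s => f'' s - m * 1)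
    · intro s
      exact (h2 s).sub ((hasDerivAt_id s).const_mul m)
    · intro s
      have := hm s
      simp only [Pi.zero_apply, mul_one]; linarith
  have hd : ∀ s, HasDerivAt (fun s => f s - f' 0 * s - m / 2 * s ^ 2)
      (f' s - f' 0 * 1 - m / 2 * (2 * s)) s := by
    intro s
    have h3 := ((h1 s).sub ((hasDerivAt_id s).const_mul (f' 0))).sub
      ((hasDerivAt_pow 2 s).const_mul (m / 2))
    exact h3.congr_deriv (by simp)
  have hmono2 : MonotoneOn (fun s => f s - f' 0 * s - m / 2 * s ^ 2) (Set.Icc 0 1) := by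
    apply monotoneOn_of_hasDerivWithinAt_nonneg (convex_Icc 0 1)
      (f' := fun s => f' s - f' 0 * 1 - m / 2 * (2 * s))
    · exact fun s _ => (hd s).continuousAt.continuousWithinAt
    · exact fun s _ => (hd s).hasDerivWithinAt
    · intro s hs
      rw [interior_Icc] at hs
      have := hmono hs.1.le
      simp only at this
      linarith
  have := hmono2 (Set.left_mem_Icc.2 zero_le_one) (Set.right_mem_Icc.2 zero_le_one) zero_le_one
  simp only at this
  linarith

lemma taylor_two_upper {f f' f'' : ℝ → ℝ} {L : ℝ} (h1 : ∀ s, HasDerivAt f (f' s) s)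
    (h2 : ∀ s, HasDerivAt f' (f'' s) s) (hL : ∀ s, f'' s ≤ L) :
    f 1 - f 0 - f' 0 ≤ L / 2 := by
  have := taylor_two_lower (f := fun s => -f s) (f' := fun s => -f' s) (f'' := fun s => -f'' s)
    (m := -L) (fun s => (h1 s).fun_neg) (fun s => (h2 s).fun_neg) (fun s => by linarith [hL s])
  linarith

lemma fderiv_eq_sum_pd {σ : (Idx19 → ℝ) → ℝ} (X Y : Idx19 → ℝ) :
    fderiv ℝ σ X Y = ∑ A, pd σ X A * Y A := by
  conv_lhs => rw [pi_eq_sum_univ' Y]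
  rw [map_sum]
  refine Finset.sum_congr rfl fun A _ => ?_
  rw [map_smul, smul_eq_mul, mul_comm]
  rfl

lemma contDiff_fderiv_apply {n m : ℕ∞} (hm : (m : WithTop ℕ∞) + 1 ≤ n)
    {σ : (Idx19 → ℝ) → ℝ} (hσ : ContDiff ℝ n σ)
    (Z : Idx19 → ℝ) : ContDiff ℝ m (fun X => fderiv ℝ σ X Z) :=
  (hσ.fderiv_right hm).clm_apply contDiff_const

lemma contDiff_top_fderiv_apply {σ : (Idx19 → ℝ) → ℝ} (hσ : ContDiff ℝ (⊤ : ℕ∞) σ)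
    (Z : Idx19 → ℝ) : ContDiff ℝ (⊤ : ℕ∞) (fun X => fderiv ℝ σ X Z) :=
  contDiff_fderiv_apply (by simp) hσ Z

lemma hessB_symm {σ : (Idx19 → ℝ) → ℝ} (hσ : ContDiff ℝ (⊤ : ℕ∞) σ) (X Y Z : Idx19 → ℝ) :
    hessB σ X Y Z = hessB σ X Z Y := by
  have hd : DifferentiableAt ℝ (fderiv ℝ σ) X :=
    ((hσ.fderiv_right (m := 1) (by norm_cast)).differentiable (by simp)) X
  have key : ∀ Y Z, hessB σ X Y Z = fderiv ℝ (fderiv ℝ σ) X Y Z := by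
    intro Y Z
    unfold hessB
    rw [fderiv_clm_apply hd (differentiableAt_const _)]
    simp
  rw [key, key]
  exact (hσ.contDiffAt.isSymmSndFDerivAt (by simp; norm_cast)) Y Z

lemma hessB_sum_right {σ : (Idx19 → ℝ) → ℝ} (hσ : ContDiff ℝ (⊤ : ℕ∞) σ) (X Y Z : Idx19 → ℝ) :
    hessB σ X Y Z = ∑ A, hessB σ X Y (Pi.single A 1) * Z A := by
  rw [hessB_symm hσ]
  simp_rw [hessB_symm hσ X Y]
  unfold hessB
  exact fderiv_eq_sum_pd X Z

/-- Along a segment, a differentiable function has its directional derivative. -/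
lemma hasDerivAt_line {σ : (Idx19 → ℝ) → ℝ} (hσ : Differentiable ℝ σ) (X P : Idx19 → ℝ) (s : ℝ) :
    HasDerivAt (fun s : ℝ => σ (X + s • P)) (fderiv ℝ σ (X + s • P) P) s := by
  have h1 : HasDerivAt (fun s : ℝ => X + s • P) P s := by
    simpa using ((hasDerivAt_id s).smul_const P).const_add X
  exact (hσ _).hasFDerivAt.comp_hasDerivAt s h1

/-- A lower bound on the Hessian bounds from below the Bregman distance
`σ(X) - σ(Y) - ∇σ(Y)·(X - Y)`. -/
lemma bregman_lower {σ : (Idx19 → ℝ) → ℝ} (hσ : ContDiff ℝ (⊤ : ℕ∞) σ) {m : ℝ}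
    (hm : ∀ X Y : Idx19 → ℝ, m * (∑ A, Y A ^ 2) ≤ hessQ σ X Y) (X Y : Idx19 → ℝ) :
    m / 2 * (∑ A, (X A - Y A) ^ 2) ≤ σ X - σ Y - ∑ A, pd σ Y A * (X A - Y A) := by
  have h := taylor_two_lower (f := fun s : ℝ => σ (Y + s • (X - Y)))
    (f' := fun s => fderiv ℝ σ (Y + s • (X - Y)) (X - Y))
    (f'' := fun s => hessQ σ (Y + s • (X - Y)) (X - Y)) (m := m * ∑ A, (X A - Y A) ^ 2)
    (hasDerivAt_line (hσ.differentiable (by simp)) Y (X - Y))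
    (hasDerivAt_line ((contDiff_top_fderiv_apply hσ (X - Y)).differentiable (by simp)) Y (X - Y))
    (fun s => hm _ _)
  simp only [one_smul, zero_smul, add_zero, add_sub_cancel, fderiv_eq_sum_pd, Pi.sub_apply] at h
  linarith

lemma bregman_upper {σ : (Idx19 → ℝ) → ℝ} (hσ : ContDiff ℝ (⊤ : ℕ∞) σ) {L : ℝ}
    (hL : ∀ X Y : Idx19 → ℝ, hessQ σ X Y ≤ L * (∑ A, Y A ^ 2)) (X Y : Idx19 → ℝ) :
    σ X - σ Y - ∑ A, pd σ Y A * (X A - Y A) ≤ L / 2 * (∑ A, (X A - Y A) ^ 2) := by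
  have h := taylor_two_upper (f := fun s : ℝ => σ (Y + s • (X - Y)))
    (f' := fun s => fderiv ℝ σ (Y + s • (X - Y)) (X - Y))
    (f'' := fun s => hessQ σ (Y + s • (X - Y)) (X - Y)) (L := L * ∑ A, (X A - Y A) ^ 2)
    (hasDerivAt_line (hσ.differentiable (by simp)) Y (X - Y))
    (hasDerivAt_line ((contDiff_top_fderiv_apply hσ (X - Y)).differentiable (by simp)) Y (X - Y))
    (fun s => hL _ _)
  simp only [one_smul, zero_smul, add_zero, add_sub_cancel, fderiv_eq_sum_pd, Pi.sub_apply] at h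
  linarith

/-- Co-coercivity: for a convex function whose Hessian is at most `L`, the Bregman distance
controls the squared difference of the gradients. -/
lemma bregman_ge_grad {σ : (Idx19 → ℝ) → ℝ} (hσ : ContDiff ℝ (⊤ : ℕ∞) σ) {L : ℝ} (hL0 : 0 < L)
    (h0 : ∀ X Y : Idx19 → ℝ, 0 ≤ hessQ σ X Y)
    (hL : ∀ X Y : Idx19 → ℝ, hessQ σ X Y ≤ L * (∑ A, Y A ^ 2)) (X Y : Idx19 → ℝ) :
    1 / (2 * L) * (∑ A, (pd σ X A - pd σ Y A) ^ 2) ≤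
      σ X - σ Y - ∑ A, pd σ Y A * (X A - Y A) := by
  -- Compare `X` and `Y` with the point reached from `X` by a gradient step of length `1 / L` for the function `σ - ∇σ(Y)·`.
  set Z : Idx19 → ℝ := fun A => X A - (1 / L) * (pd σ X A - pd σ Y A) with hZ
  have h1 := bregman_lower hσ (m := 0) (by simpa using h0) Z Y
  have h2 := bregman_upper hσ hL Z X
  have e1 : ∑ A, pd σ Y A * (Z A - Y A) = ∑ A, pd σ Y A * (X A - Y A)
      - (1 / L) * ∑ A, pd σ Y A * (pd σ X A - pd σ Y A) := by
    rw [Finset.mul_sum, ← Finset.sum_sub_distrib]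
    refine Finset.sum_congr rfl fun A _ => ?_
    simp only [hZ]; ring
  have e2 : ∑ A, pd σ X A * (Z A - X A) =
      - (1 / L) * ∑ A, pd σ X A * (pd σ X A - pd σ Y A) := by
    rw [Finset.mul_sum]
    refine Finset.sum_congr rfl fun A _ => ?_
    simp only [hZ]; ring
  have e3 : ∑ A, (Z A - X A) ^ 2 = (1 / L) ^ 2 * ∑ A, (pd σ X A - pd σ Y A) ^ 2 := by
    rw [Finset.mul_sum]
    refine Finset.sum_congr rfl fun A _ => ?_
    simp only [hZ]; ring
  have e4 : ∑ A, (pd σ X A - pd σ Y A) ^ 2 = ∑ A, pd σ X A * (pd σ X A - pd σ Y A)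
      - ∑ A, pd σ Y A * (pd σ X A - pd σ Y A) := by
    rw [← Finset.sum_sub_distrib]
    refine Finset.sum_congr rfl fun A _ => ?_
    ring
  rw [e1] at h1
  rw [e2, e3] at h2
  have e5 : L / 2 * ((1 / L) ^ 2 * ∑ A, (pd σ X A - pd σ Y A) ^ 2)
      = (1 / (2 * L)) * ∑ A, (pd σ X A - pd σ Y A) ^ 2 := by
    field_simp
  have e6 : (1 / L) * ∑ A, (pd σ X A - pd σ Y A) ^ 2
      = 2 * (1 / (2 * L) * ∑ A, (pd σ X A - pd σ Y A) ^ 2) := by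
    field_simp
  rw [e5] at h2
  rw [e4] at e6
  rw [mul_sub] at e6
  rw [← e4] at e6
  linarith

/-- The gradient map of a function with Hessian bounded by `M` is Lipschitz. -/
lemma pd_lipschitz {σ : (Idx19 → ℝ) → ℝ} (hσ : ContDiff ℝ (⊤ : ℕ∞) σ) {M : ℝ}
    (h2a : ∀ X Y Z : Idx19 → ℝ,
      |hessB σ X Y Z| ≤ M * Real.sqrt (∑ A, Y A ^ 2) * Real.sqrt (∑ A, Z A ^ 2))
    (X Y : Idx19 → ℝ) (A : Idx19) :
    |pd σ X A - pd σ Y A| ≤ M * Real.sqrt (∑ A, (X A - Y A) ^ 2) := by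
  have hd := hasDerivAt_line
    ((contDiff_top_fderiv_apply hσ (Pi.single A 1)).differentiable (by simp)) Y (X - Y)
  have h := Convex.norm_image_sub_le_of_norm_hasDerivWithin_le
    (f := fun s : ℝ => fderiv ℝ σ (Y + s • (X - Y)) (Pi.single A 1)) (s := Set.univ)
    (C := M * Real.sqrt (∑ A, (X A - Y A) ^ 2)) (x := 0) (y := 1)
    (fun s _ => (hd s).hasDerivWithinAt) (fun s _ => by
      have := h2a (Y + s • (X - Y)) (X - Y) (Pi.single A 1)
      have e : ∑ B, (Pi.single A (1 : ℝ) : Idx19 → ℝ) B ^ 2 = 1 := by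
        simp [Pi.single_apply, ite_pow]
      rw [e, Real.sqrt_one, mul_one] at this
      exact this)
    convex_univ trivial trivial
  simpa [pd] using h

/-- Quadratic Taylor remainder of the gradient map of a function with bounded third derivative. -/
lemma pd_taylor {σ : (Idx19 → ℝ) → ℝ} (hσ : ContDiff ℝ (⊤ : ℕ∞) σ) {M : ℝ}
    (h2b : ∀ X Y Z W : Idx19 → ℝ,
      |d3B σ X Y Z W| ≤ M * Real.sqrt (∑ A, Y A ^ 2) * Real.sqrt (∑ A, Z A ^ 2)
        * Real.sqrt (∑ A, W A ^ 2))
    (X Y : Idx19 → ℝ) (A : Idx19) :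
    |pd σ X A - pd σ Y A - hessB σ Y (X - Y) (Pi.single A 1)|
      ≤ M / 2 * (∑ A, (X A - Y A) ^ 2) := by
  have c1 := contDiff_top_fderiv_apply hσ (Pi.single A 1)
  have c2 := contDiff_top_fderiv_apply c1 (X - Y)
  have hd1 := hasDerivAt_line (c1.differentiable (by simp)) Y (X - Y)
  have hd2 := hasDerivAt_line (c2.differentiable (by simp)) Y (X - Y)
  have e : ∑ B, (Pi.single A (1 : ℝ) : Idx19 → ℝ) B ^ 2 = 1 := by
    simp [Pi.single_apply, ite_pow]
  have hb : ∀ s : ℝ, |d3B σ (Y + s • (X - Y)) (X - Y) (X - Y) (Pi.single A 1)|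
      ≤ M * ∑ A, (X A - Y A) ^ 2 := by
    intro s
    have := h2b (Y + s • (X - Y)) (X - Y) (X - Y) (Pi.single A 1)
    rw [e, Real.sqrt_one, mul_one, mul_assoc, Real.mul_self_sqrt (by positivity)] at this
    exact this
  have hl := taylor_two_lower hd1 hd2 (fun s => (abs_le.1 (hb s)).1)
  have hu := taylor_two_upper hd1 hd2 (fun s => (abs_le.1 (hb s)).2)
  simp only [one_smul, zero_smul, add_zero, add_sub_cancel] at hl hu
  unfold pd hessB
  rw [abs_le]
  constructor <;> linarith

/-! ### Space-time calculus and Gronwall's inequality -/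

/-- The space-time domain. -/
abbrev SpT : Type := (Fin 3 → ℝ) × ℝ

lemma hasDerivAt_time {e : SpT → ℝ} (he : ContDiff ℝ 1 e) (x : Fin 3 → ℝ) (t : ℝ) :
    HasDerivAt (fun s => e (x, s)) (fderiv ℝ e (x, t) (0, 1)) t := by
  have h1 : HasDerivAt (fun s : ℝ => (x, s)) ((0 : Fin 3 → ℝ), (1 : ℝ)) t :=
    (hasDerivAt_const t x).prodMk (hasDerivAt_id t)
  exact ((he.differentiable (by simp)) (x, t)).hasFDerivAt.comp_hasDerivAt t h1

lemma hasFDerivAt_space {e : SpT → ℝ} (he : ContDiff ℝ 1 e) (x : Fin 3 → ℝ) (t : ℝ) :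
    HasFDerivAt (fun z => e (z, t))
      ((fderiv ℝ e (x, t)).comp (ContinuousLinearMap.inl ℝ (Fin 3 → ℝ) ℝ)) x := by
  have h1 : HasFDerivAt (fun z : Fin 3 → ℝ => (z, t))
      (ContinuousLinearMap.inl ℝ (Fin 3 → ℝ) ℝ) x := hasFDerivAt_prodMk_left x t
  exact ((he.differentiable (by simp)) (x, t)).hasFDerivAt.comp x h1

lemma fderiv_space {e : SpT → ℝ} (he : ContDiff ℝ 1 e) (x : Fin 3 → ℝ) (t : ℝ)
    (d : Fin 3 → ℝ) :
    fderiv ℝ (fun z => e (z, t)) x d = fderiv ℝ e (x, t) (d, 0) := by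
  rw [(hasFDerivAt_space he x t).fderiv]
  simp

lemma continuous_fderiv_dir {e : SpT → ℝ} (he : ContDiff ℝ 1 e) (d : SpT) :
    Continuous (fun q => fderiv ℝ e q d) :=
  (he.continuous_fderiv (by simp)).clm_apply continuous_const

lemma fderiv_zero_off {f : (Fin 3 → ℝ) → ℝ} {K : Set (Fin 3 → ℝ)} (hK : IsClosed K)
    (hf : ∀ x, x ∉ K → f x = 0) {x : Fin 3 → ℝ} (hx : x ∉ K) : fderiv ℝ f x = 0 := by
  have : f =ᶠ[nhds x] fun _ => (0 : ℝ) := by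
    filter_upwards [hK.isOpen_compl.mem_nhds hx] with y hy using hf y hy
  rw [this.fderiv_eq]
  simp

/-- The integral of a spatial derivative of a compactly supported function vanishes. -/
lemma integral_fderiv_eq_zero {f : (Fin 3 → ℝ) → ℝ} (hf : ContDiff ℝ 1 f)
    {K : Set (Fin 3 → ℝ)} (hK : IsCompact K) (h0 : ∀ x, x ∉ K → f x = 0) (d : Fin 3 → ℝ) :
    Integrable (fun x => fderiv ℝ f x d) ∧ ∫ x, fderiv ℝ f x d = 0 := by
  have i1 : Integrable f :=
    hf.continuous.integrable_of_hasCompactSupport (HasCompactSupport.intro hK h0)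
  have i2 : Integrable (fun x => fderiv ℝ f x d) :=
    ((hf.continuous_fderiv (by simp)).clm_apply
      continuous_const).integrable_of_hasCompactSupport
      (HasCompactSupport.intro hK (fun x hx => by rw [fderiv_zero_off hK.isClosed h0 hx]; rfl))
  refine ⟨i2, ?_⟩
  have := integral_mul_fderiv_eq_neg_fderiv_mul_of_integrable (μ := volume) (𝕜 := ℝ)
    (f := fun _ : Fin 3 → ℝ => (1 : ℝ)) (g := f) (v := d) (by simp) (by simpa using i2)
    (by simpa using i1) (fun _ _ => by fun_prop)
    (fun x _ => hf.differentiable (by simp) x)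
  simpa using this

/-- Gronwall's inequality for the integral of a density `e` which satisfies the balance law
`∂ₜe - div flux ≤ C₁ e + g` and is compactly supported in space on `[0, T]`. -/
lemma gronwall_density {e : SpT → ℝ} (he : ContDiff ℝ 1 e) {T C₁ : ℝ} (hT : 0 < T) (hC₁ : 0 ≤ C₁)
    {K : Set (Fin 3 → ℝ)} (hK : IsCompact K)
    (heK : ∀ t ∈ Set.Icc 0 T, ∀ x, x ∉ K → e (x, t) = 0)
    (hepos : ∀ t ∈ Set.Icc 0 T, ∀ x, 0 ≤ e (x, t))
    {flux : Fin 3 → SpT → ℝ} (hflux : ∀ α, ContDiff ℝ 1 (flux α))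
    (hfK : ∀ α, ∀ t ∈ Set.Icc 0 T, ∀ x, x ∉ K → flux α (x, t) = 0)
    {g : (Fin 3 → ℝ) → ℝ} (hg : Integrable g) (hg0 : ∀ x, 0 ≤ g x)
    (hineq : ∀ t ∈ Set.Ioo 0 T, ∀ x,
      fderiv ℝ e (x, t) (0, 1) - ∑ α, fderiv ℝ (flux α) (x, t) (Pi.single α 1, 0)
        ≤ C₁ * e (x, t) + g x) :
    ∀ t ∈ Set.Icc 0 T, ∫ x, e (x, t) ≤ Real.exp (C₁ * T) * ((∫ x, e (x, 0)) + T * ∫ x, g x) := by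
  have hcont : ∀ t, Continuous (fun x => e (x, t)) := fun t =>
    he.continuous.comp (by fun_prop)
  have hint : ∀ t ∈ Set.Icc 0 T, Integrable (fun x => e (x, t)) := fun t ht =>
    (hcont t).integrable_of_hasCompactSupport (HasCompactSupport.intro hK (heK t ht))
  have hdcont : Continuous (fun q : SpT => fderiv ℝ e q (0, 1)) := continuous_fderiv_dir he _
  have hdK : ∀ t ∈ Set.Ioo 0 T, ∀ x, x ∉ K → fderiv ℝ e (x, t) (0, 1) = 0 := by
    intro t ht x hx
    have h1 := hasDerivAt_time he x t
    have h2 : (fun s => e (x, s)) =ᶠ[nhds t] fun _ => (0 : ℝ) := by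
      filter_upwards [Ioo_mem_nhds ht.1 ht.2] with s hs
      exact heK s ⟨hs.1.le, hs.2.le⟩ x hx
    exact h1.unique ((hasDerivAt_const t (0 : ℝ)).congr_of_eventuallyEq h2)
  -- continuity of the total energy on the closed interval
  have hEcont : ContinuousOn (fun t => ∫ x, e (x, t)) (Set.Icc 0 T) := by
    apply continuousOn_integral_of_compact_support (f := fun t x => e (x, t)) hK
    · apply Continuous.continuousOn
      exact he.continuous.comp (by fun_prop)
    · intro t x ht hx
      exact heK t ht x hx
  -- differentiation under the integral sign
  have hEder : ∀ t ∈ Set.Ioo 0 T, HasDerivAt (fun t => ∫ x, e (x, t))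
      (∫ x, fderiv ℝ e (x, t) (0, 1)) t := by
    intro t ht
    obtain ⟨B, hB⟩ := (hK.prod (isCompact_Icc (a := (0 : ℝ)) (b := T))).exists_bound_of_continuousOn
      (f := fun q : SpT => fderiv ℝ e q (0, 1)) hdcont.continuousOn
    refine (hasDerivAt_integral_of_dominated_loc_of_deriv_le (μ := volume)
      (F := fun s x => e (x, s)) (F' := fun s x => fderiv ℝ e (x, s) (0, 1))
      (bound := K.indicator fun _ => B) (Ioo_mem_nhds ht.1 ht.2) ?_
      (hint t ⟨ht.1.le, ht.2.le⟩) ?_ ?_ ?_ ?_).2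
    · exact Filter.Eventually.of_forall fun s => (hcont s).aestronglyMeasurable
    · exact (hdcont.comp (by fun_prop : Continuous fun x : Fin 3 → ℝ =>
        ((x, t) : SpT))).aestronglyMeasurable
    · refine Filter.Eventually.of_forall fun x s hs => ?_
      by_cases hx : x ∈ K
      · rw [Set.indicator_of_mem hx]
        exact hB (x, s) ⟨hx, hs.1.le, hs.2.le⟩
      · rw [Set.indicator_of_notMem hx, hdK s hs x hx, norm_zero]
    · rw [integrable_indicator_iff hK.measurableSet]
      exact integrableOn_const hK.measure_lt_top.ne
    · exact Filter.Eventually.of_forall fun x s _ => hasDerivAt_time he x s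
  have hIg : 0 ≤ ∫ x, g x := integral_nonneg hg0
  have hEle : ∀ t ∈ Set.Ioo 0 T, ∫ x, fderiv ℝ e (x, t) (0, 1)
      ≤ C₁ * (∫ x, e (x, t)) + ∫ x, g x := by
    intro t ht
    have ht' : t ∈ Set.Icc 0 T := ⟨ht.1.le, ht.2.le⟩
    have hdiv : ∀ α, Integrable (fun x => fderiv ℝ (flux α) (x, t) (Pi.single α 1, 0)) ∧
        ∫ x, fderiv ℝ (flux α) (x, t) (Pi.single α 1, 0) = 0 := by
      intro α
      have h := integral_fderiv_eq_zero (f := fun z => flux α (z, t))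
        ((hflux α).comp (contDiff_id.prodMk contDiff_const)) hK (hfK α t ht') (Pi.single α 1)
      simp_rw [fderiv_space (hflux α)] at h
      exact h
    have hdint : Integrable (fun x => fderiv ℝ e (x, t) (0, 1)) :=
      (hdcont.comp (by fun_prop : Continuous fun x : Fin 3 → ℝ =>
        ((x, t) : SpT))).integrable_of_hasCompactSupport (HasCompactSupport.intro hK (hdK t ht))
    have h1 : ∫ x, fderiv ℝ e (x, t) (0, 1) = ∫ x, (fderiv ℝ e (x, t) (0, 1)
        - ∑ α, fderiv ℝ (flux α) (x, t) (Pi.single α 1, 0)) := by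
      rw [integral_sub hdint (integrable_finsetSum _ fun α _ => (hdiv α).1),
        integral_finsetSum _ fun α _ => (hdiv α).1]
      simp [fun α => (hdiv α).2]
    rw [h1, ← integral_const_mul, ← integral_add ((hint t ht').const_mul C₁) hg]
    exact integral_mono (hdint.sub (integrable_finsetSum _ fun α _ => (hdiv α).1))
      (((hint t ht').const_mul C₁).add hg) (hineq t ht)
  have hanti : AntitoneOn (fun t => Real.exp (-C₁ * t) * (∫ x, e (x, t)) - (∫ x, g x) * t)
      (Set.Icc 0 T) := by
    have hexp : ∀ t, HasDerivAt (fun t => Real.exp (-C₁ * t)) (Real.exp (-C₁ * t) * (-C₁)) t := by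
      intro t
      have := ((hasDerivAt_id t).const_mul (-C₁)).exp
      simpa using this
    apply antitoneOn_of_hasDerivWithinAt_nonpos (convex_Icc 0 T)
      (f' := fun t => Real.exp (-C₁ * t) * (-C₁) * (∫ x, e (x, t))
        + Real.exp (-C₁ * t) * (∫ x, fderiv ℝ e (x, t) (0, 1)) - (∫ x, g x) * 1)
    · exact ((by fun_prop : Continuous fun t => Real.exp (-C₁ * t)).continuousOn.mul hEcont).sub
        (by fun_prop)
    · intro t ht
      rw [interior_Icc] at ht
      exact (((hexp t).mul (hEder t ht)).sub
        ((hasDerivAt_id t).const_mul (∫ x, g x))).hasDerivWithinAt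
    · intro t ht
      rw [interior_Icc] at ht
      have h1 := mul_le_mul_of_nonneg_left (hEle t ht) (Real.exp_pos (-C₁ * t)).le
      have h2 : Real.exp (-C₁ * t) ≤ 1 := by
        rw [Real.exp_le_one_iff]; nlinarith [ht.1, mul_nonneg hC₁ ht.1.le]
      have h3 := mul_le_mul_of_nonneg_right h2 hIg
      linarith
  intro t ht
  have h := hanti (Set.left_mem_Icc.2 hT.le) ht ht.1
  simp only [mul_zero, Real.exp_zero, one_mul, sub_zero] at h
  have hE0 : 0 ≤ ∫ x, e (x, 0) := integral_nonneg fun x => hepos 0 (Set.left_mem_Icc.2 hT.le) x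
  have h3 : Real.exp (-C₁ * t) * (∫ x, e (x, t)) ≤ (∫ x, e (x, 0)) + T * ∫ x, g x := by
    have := mul_le_mul_of_nonneg_right ht.2 hIg
    linarith
  have h4 := mul_le_mul_of_nonneg_left h3 (Real.exp_pos (C₁ * t)).le
  rw [← mul_assoc, ← Real.exp_add, neg_mul, add_neg_cancel, Real.exp_zero, one_mul] at h4
  refine h4.trans (mul_le_mul_of_nonneg_right ?_ (by positivity))
  exact Real.exp_le_exp.2 (mul_le_mul_of_nonneg_left ht.2 hC₁)

/-! ### Null Lagrangians -/

/-- Cofactors as `2 × 2` minors, with cyclic indices in `Fin 3` in place of signs. -/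
lemma cof3_eq (M : Mat3) (i α : Fin 3) :
    cof3 M i α = M (i + 1) (α + 1) * M (i + 2) (α + 2) - M (i + 1) (α + 2) * M (i + 2) (α + 1) := by
  fin_cases i <;> fin_cases α <;> simp [cof3, lev, Fin.sum_univ_three] <;> ring

lemma det3_eq (M : Mat3) : det3 M = ∑ α, M 0 α * cof3 M 0 α := by
  simp only [det3, Matrix.det_fin_three, Fin.sum_univ_three, cof3_eq, Matrix.of_apply]
  simp
  ring

lemma contDiff_Phi (A : Idx19) {n : WithTop ℕ∞} : ContDiff ℝ n (fun N : Mat3 => Phi N A) := by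
  rcases A with ⟨i, α⟩ | ⟨i, α⟩ | _
  · simp only [Phi]; fun_prop
  · simp only [Phi, cof3_eq]; fun_prop
  · simp only [Phi, det3_eq, cof3_eq]; fun_prop

/-- Elementary matrix with a single entry `1`. -/
def elem (i α : Fin 3) : Mat3 := Pi.single i (Pi.single α 1)

lemma elem_apply (i α j β : Fin 3) : elem i α j β = if j = i ∧ β = α then 1 else 0 := by
  unfold elem
  by_cases h : j = i
  · subst h; simp [Pi.single_apply]
  · simp [h]

lemma hasDerivAt_entry (M E : Mat3) (j β : Fin 3) :
    HasDerivAt (fun s : ℝ => (M + s • E) j β) (E j β) 0 := by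
  have : HasDerivAt (fun s : ℝ => M j β + s * E j β) (1 * E j β) 0 :=
    ((hasDerivAt_id (0 : ℝ)).mul_const (E j β)).const_add _
  simpa using this

lemma hasDerivAt_cof (M E : Mat3) (j β : Fin 3) :
    HasDerivAt (fun s : ℝ => cof3 (M + s • E) j β)
      (E (j + 1) (β + 1) * M (j + 2) (β + 2) + M (j + 1) (β + 1) * E (j + 2) (β + 2)
        - (E (j + 1) (β + 2) * M (j + 2) (β + 1) + M (j + 1) (β + 2) * E (j + 2) (β + 1))) 0 := by
  simp only [cof3_eq]
  have := ((hasDerivAt_entry M E (j + 1) (β + 1)).mul (hasDerivAt_entry M E (j + 2) (β + 2))).sub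
    ((hasDerivAt_entry M E (j + 1) (β + 2)).mul (hasDerivAt_entry M E (j + 2) (β + 1)))
  exact this.congr_deriv (by simp)

lemma dPhi_eq_of_hasDerivAt {M : Mat3} {A : Idx19} {i α : Fin 3} {d : ℝ}
    (h : HasDerivAt (fun s : ℝ => Phi (M + s • elem i α) A) d 0) : dPhi M A i α = d := by
  have h1 : HasDerivAt (fun s : ℝ => M + s • elem i α) (elem i α) 0 := by
    simpa using ((hasDerivAt_id (0 : ℝ)).smul_const (elem i α)).const_add M
  have h2 : HasFDerivAt (fun N : Mat3 => Phi N A) (fderiv ℝ (fun N : Mat3 => Phi N A) M)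
      (M + (0 : ℝ) • elem i α) := by
    rw [zero_smul, add_zero]
    exact ((contDiff_Phi A (n := 1)).differentiable (by simp) M).hasFDerivAt
  have h3 := h2.comp_hasDerivAt (0 : ℝ) h1
  exact h3.unique h

lemma dPhi_entry (M : Mat3) (j β i α : Fin 3) :
    dPhi M (Sum.inl (j, β)) i α = elem i α j β :=
  dPhi_eq_of_hasDerivAt (hasDerivAt_entry M (elem i α) j β)

lemma dPhi_cof (M : Mat3) (j β i α : Fin 3) :
    dPhi M (Sum.inr (Sum.inl (j, β))) i α =
      elem i α (j + 1) (β + 1) * M (j + 2) (β + 2) + M (j + 1) (β + 1) * elem i α (j + 2) (β + 2)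
        - (elem i α (j + 1) (β + 2) * M (j + 2) (β + 1)
          + M (j + 1) (β + 2) * elem i α (j + 2) (β + 1)) :=
  dPhi_eq_of_hasDerivAt (hasDerivAt_cof M (elem i α) j β)

/-- The derivative of the determinant is the cofactor matrix. -/
lemma dPhi_det (M : Mat3) (u : Unit) (i α : Fin 3) :
    dPhi M (Sum.inr (Sum.inr u)) i α = cof3 M i α := by
  have h := HasDerivAt.fun_sum (u := Finset.univ) fun β _ =>
    (hasDerivAt_entry M (elem i α) 0 β).mul (hasDerivAt_cof M (elem i α) 0 β)
  rw [dPhi_eq_of_hasDerivAt (A := Sum.inr (Sum.inr u))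
    (h.congr_of_eventuallyEq (Filter.Eventually.of_forall fun s => det3_eq _))]
  simp only [cof3_eq, Fin.sum_univ_three, elem_apply]
  fin_cases i <;> fin_cases α <;> simp <;> ring

lemma contDiff_dPhi (A : Idx19) (i α : Fin 3) {n : WithTop ℕ∞} :
    ContDiff ℝ n (fun N : Mat3 => dPhi N A i α) := by
  rcases A with ⟨j, β⟩ | ⟨j, β⟩ | u
  · simp only [dPhi_entry]; exact contDiff_const
  · simp only [dPhi_cof]; fun_prop
  · simp only [dPhi_det, cof3_eq]; fun_prop

/-- `∂Φ/∂F` is at most quadratic in `F`, and its quadratic part is `cof F`, itself a component of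
`Φ`; hence its increments are controlled by those of `Φ`. -/
lemma dPhi_sub_le (M N : Mat3) (A : Idx19) (i α : Fin 3) :
    |dPhi M A i α - dPhi N A i α| ≤ 4 * Real.sqrt (∑ B, (Phi M B - Phi N B) ^ 2) := by
  set p := Real.sqrt (∑ B, (Phi M B - Phi N B) ^ 2)
  have hp0 : 0 ≤ p := Real.sqrt_nonneg _
  have hB : ∀ B, |Phi M B - Phi N B| ≤ p := fun B =>
    Real.abs_le_sqrt (Finset.single_le_sum (f := fun B => (Phi M B - Phi N B) ^ 2)
      (fun _ _ => sq_nonneg _) (Finset.mem_univ B))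
  have hE : ∀ j β (k γ : Fin 3), |elem i α j β * (M k γ - N k γ)| ≤ p := by
    intro j β k γ
    have h := hB (Sum.inl (k, γ))
    simp only [Phi] at h
    rw [elem_apply]
    split_ifs <;> simp [h, hp0]
  rcases A with ⟨j, β⟩ | ⟨j, β⟩ | u
  · simp only [dPhi_entry, sub_self, abs_zero]; positivity
  · simp only [dPhi_cof]
    have h1 := abs_le.1 (hE (j + 1) (β + 1) (j + 2) (β + 2))
    have h2 := abs_le.1 (hE (j + 2) (β + 2) (j + 1) (β + 1))
    have h3 := abs_le.1 (hE (j + 1) (β + 2) (j + 2) (β + 1))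
    have h4 := abs_le.1 (hE (j + 2) (β + 1) (j + 1) (β + 2))
    rw [abs_le]
    constructor <;> linarith [h1.1, h1.2, h2.1, h2.2, h3.1, h3.2, h4.1, h4.2]
  · simp only [dPhi_det]
    have h := hB (Sum.inr (Sum.inl (i, α)))
    simp only [Phi] at h
    linarith

lemma sum_elem (E : Mat3) : E = ∑ i, ∑ α, E i α • elem i α := by
  ext j β
  simp only [Finset.sum_apply, Pi.smul_apply, elem_apply, smul_eq_mul]
  fin_cases j <;> fin_cases β <;> simp [Fin.sum_univ_three]

lemma fderiv_Phi_apply (M E : Mat3) (A : Idx19) :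
    fderiv ℝ (fun N : Mat3 => Phi N A) M E = ∑ i, ∑ α, dPhi M A i α * E i α := by
  conv_lhs => rw [sum_elem E]
  simp only [map_sum, map_smul, smul_eq_mul]
  refine Finset.sum_congr rfl fun i _ => Finset.sum_congr rfl fun α _ => ?_
  rw [mul_comm]
  rfl

/-- Null-Lagrangian property (Piola identity): the rows of `∂Φ^A/∂F` are divergence-free on
gradients. -/
lemma piola {F : (Fin 3 → ℝ) → Mat3} {x : Fin 3 → ℝ}
    (hF : DifferentiableAt ℝ F x)
    (hsymm : ∀ i α β, fderiv ℝ (fun z => F z i α) x (Pi.single β 1)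
      = fderiv ℝ (fun z => F z i β) x (Pi.single α 1)) (A : Idx19) (i : Fin 3) :
    ∑ α, fderiv ℝ (fun z => dPhi (F z) A i α) x (Pi.single α 1) = 0 := by
  have hd : ∀ j β, HasFDerivAt (fun z => F z j β) (fderiv ℝ (fun z => F z j β) x) x := by
    intro j β
    have : DifferentiableAt ℝ (fun z => F z j β) x := by fun_prop
    exact this.hasFDerivAt
  rcases A with ⟨j, β⟩ | ⟨j, β⟩ | u
  · simp [dPhi_entry]
  · have key : ∀ α, fderiv ℝ (fun z => dPhi (F z) (Sum.inr (Sum.inl (j, β))) i α) x (Pi.single α 1)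
        = elem i α (j + 1) (β + 1) * fderiv ℝ (fun z => F z (j + 2) (β + 2)) x (Pi.single α 1)
        + elem i α (j + 2) (β + 2) * fderiv ℝ (fun z => F z (j + 1) (β + 1)) x (Pi.single α 1)
        - (elem i α (j + 1) (β + 2) * fderiv ℝ (fun z => F z (j + 2) (β + 1)) x (Pi.single α 1)
        + elem i α (j + 2) (β + 1)
          * fderiv ℝ (fun z => F z (j + 1) (β + 2)) x (Pi.single α 1)) := by
      intro α
      simp only [dPhi_cof]
      have := ((((hd (j + 2) (β + 2)).const_mul (elem i α (j + 1) (β + 1))).add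
        ((hd (j + 1) (β + 1)).mul_const (elem i α (j + 2) (β + 2)))).sub
        (((hd (j + 2) (β + 1)).const_mul (elem i α (j + 1) (β + 2))).add
        ((hd (j + 1) (β + 2)).mul_const (elem i α (j + 2) (β + 1))))).fderiv
      exact (DFunLike.congr_fun this (Pi.single α 1)).trans (by simp)
    simp only [key, elem_apply, Fin.sum_univ_three]
    have h1 := fun j => hsymm j 0 1
    have h2 := fun j => hsymm j 0 2
    have h3 := fun j => hsymm j 1 2
    fin_cases j <;> fin_cases β <;> fin_cases i <;> simp [h1, h2, h3]
  · have key : ∀ α, fderiv ℝ (fun z => dPhi (F z) (Sum.inr (Sum.inr u)) i α) x (Pi.single α 1)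
        = F x (i + 1) (α + 1) * fderiv ℝ (fun z => F z (i + 2) (α + 2)) x (Pi.single α 1)
        + F x (i + 2) (α + 2) * fderiv ℝ (fun z => F z (i + 1) (α + 1)) x (Pi.single α 1)
        - (F x (i + 1) (α + 2) * fderiv ℝ (fun z => F z (i + 2) (α + 1)) x (Pi.single α 1)
        + F x (i + 2) (α + 1) * fderiv ℝ (fun z => F z (i + 1) (α + 2)) x (Pi.single α 1)) := by
      intro α
      simp only [dPhi_det, cof3_eq]
      have := (((hd (i + 1) (α + 1)).mul (hd (i + 2) (α + 2))).sub
        ((hd (i + 1) (α + 2)).mul (hd (i + 2) (α + 1)))).fderiv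
      exact (DFunLike.congr_fun this (Pi.single α 1)).trans (by simp)
    have h1 := fun j => hsymm j 0 1
    have h2 := fun j => hsymm j 0 2
    have h3 := fun j => hsymm j 1 2
    simp only [key, Fin.sum_univ_three]
    fin_cases i <;> simp [h1, h2, h3] <;> ring

/-! ### Relative energy: algebra and error terms -/

lemma mul3_le {a b c A B C : ℝ} (ha : |a| ≤ A) (hb : |b| ≤ B) (hc : |c| ≤ C) :
    a * b * c ≤ A * B * C := by
  refine (le_abs_self _).trans ?_
  rw [abs_mul, abs_mul]
  have hA := (abs_nonneg a).trans ha
  have hB := (abs_nonneg b).trans hb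
  gcongr

/-- Estimate of the non-dissipative terms; `W`, `p`, `ρ` stand for `|v - v̂|`, `|Φ(F) - Φ(F̂)|` and
the distance to equilibrium. Here `b` is the bound for `∇v̂`, the one factor that
localizes the contribution linear in `ρ`; `171 = 3 · 3 · 19` counts the summands. -/
lemma error_sum_le {W p ρ b B M : ℝ} (hbB : b ≤ B)
    {w : Fin 3 → ℝ} {gT : Fin 3 → Idx19 → ℝ} {D Dh : Idx19 → Fin 3 → Fin 3 → ℝ}
    {gv : Fin 3 → Fin 3 → ℝ} {r S H : Idx19 → ℝ}
    (hw : ∀ i, |w i| ≤ W) (hgT : ∀ α A, |gT α A| ≤ B)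
    (hD : ∀ A i α, |D A i α - Dh A i α| ≤ 4 * p) (hDh : ∀ A i α, |Dh A i α| ≤ B)
    (hgv : ∀ i α, |gv i α| ≤ b) (hr : ∀ A, |r A| ≤ ρ) (hS : ∀ A, |S A| ≤ M * p)
    (hH : ∀ A, |S A - H A| ≤ M / 2 * p ^ 2) :
    ∑ i, ∑ α, ∑ A, (w i * gT α A * (D A i α - Dh A i α) + gv i α * (r A + S A) * D A i α
        - gv i α * Dh A i α * H A)
      ≤ 171 * (4 * B * W * p + b * B * ρ + 4 * B * ρ * p + M / 2 * B ^ 2 * p ^ 2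
        + 4 * M * B * p ^ 2) := by
  set c := 4 * B * W * p + b * B * ρ + 4 * B * ρ * p + M / 2 * B ^ 2 * p ^ 2
        + 4 * M * B * p ^ 2 with hc
  have hterm : ∀ i α A, w i * gT α A * (D A i α - Dh A i α) + gv i α * (r A + S A) * D A i α
        - gv i α * Dh A i α * H A ≤ c := by
    intro i α A
    have hgv' : |gv i α| ≤ B := (hgv i α).trans hbB
    have h1 := mul3_le (hw i) (hgT α A) (hD A i α)
    have h2 := mul3_le (hgv i α) (hDh A i α) (hr A)
    have h3 := mul3_le hgv' (hr A) (hD A i α)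
    have h4 := mul3_le hgv' (hH A) (hDh A i α)
    have h5 := mul3_le hgv' (hS A) (hD A i α)
    calc _ = w i * gT α A * (D A i α - Dh A i α) + gv i α * Dh A i α * r A
          + gv i α * r A * (D A i α - Dh A i α) + gv i α * (S A - H A) * Dh A i α
          + gv i α * S A * (D A i α - Dh A i α) := by ring
      _ ≤ _ := add_le_add (add_le_add (add_le_add (add_le_add h1 h2) h3) h4) h5
      _ = c := by rw [hc]; ring
  calc _ ≤ ∑ _i : Fin 3, ∑ _α : Fin 3, ∑ _A : Idx19, c :=
        Finset.sum_le_sum fun i _ => Finset.sum_le_sum fun α _ => Finset.sum_le_sum fun A _ =>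
          hterm i α A
    _ = 171 * c := by
        simp [Finset.sum_const, Fintype.card_sum, Fintype.card_prod]
        ring

/-- Absorption of the linear term in `ρ` into the dissipation `ρ² / (ε γᵥ)`. -/
lemma absorb {W p ρ b B M κ γv ε e : ℝ} (hκ : 0 < κ) (hγv : 0 < γv) (hε : 0 < ε) (hB : 0 ≤ B)
    (hM : 0 ≤ M) (he : κ * (W ^ 2 + p ^ 2 + ρ ^ 2) ≤ e) :
    171 * (4 * B * W * p + b * B * ρ + 4 * B * ρ * p + M / 2 * B ^ 2 * p ^ 2
        + 4 * M * B * p ^ 2) - 1 / ε * (1 / γv * ρ ^ 2)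
      ≤ 171 * (4 * B + M / 2 * B ^ 2 + 4 * M * B) / κ * e + ε * (γv * (171 * b * B) ^ 2 / 4) := by
  have h1 : 171 * b * B * ρ - 1 / ε * (1 / γv * ρ ^ 2) ≤ ε * (γv * (171 * b * B) ^ 2 / 4) := by
    have hk : 0 < ε * γv := mul_pos hε hγv
    have h : 0 ≤ 1 / (ε * γv) * (ρ - ε * γv * (171 * b * B) / 2) ^ 2 := by positivity
    have e1 : 1 / (ε * γv) * (ρ - ε * γv * (171 * b * B) / 2) ^ 2
        = 1 / ε * (1 / γv * ρ ^ 2) - 171 * b * B * ρ + ε * (γv * (171 * b * B) ^ 2 / 4) := by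
      field_simp
      ring
    linarith
  have h2 : W ^ 2 + p ^ 2 + ρ ^ 2 ≤ e / κ := by
    rw [le_div_iff₀ hκ]; linarith
  have h3 : 4 * B * W * p + 4 * B * ρ * p + M / 2 * B ^ 2 * p ^ 2 + 4 * M * B * p ^ 2
      ≤ (4 * B + M / 2 * B ^ 2 + 4 * M * B) * (W ^ 2 + p ^ 2 + ρ ^ 2) := by
    have a1 : 0 ≤ B * (W - p) ^ 2 := by positivity
    have a2 : 0 ≤ B * (ρ - p) ^ 2 := by positivity
    have a3 : 0 ≤ M / 2 * B ^ 2 * (W ^ 2 + ρ ^ 2) := by positivity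
    have a4 : 0 ≤ 4 * M * B * (W ^ 2 + ρ ^ 2) := by positivity
    have a5 : 0 ≤ B * W ^ 2 := by positivity
    have a6 : 0 ≤ B * ρ ^ 2 := by positivity
    linarith
  have h4 := h3.trans (mul_le_mul_of_nonneg_left h2 (by positivity :
    0 ≤ 4 * B + M / 2 * B ^ 2 + 4 * M * B))
  have e2 : 171 * (4 * B + M / 2 * B ^ 2 + 4 * M * B) / κ * e
      = 171 * ((4 * B + M / 2 * B ^ 2 + 4 * M * B) * (e / κ)) := by ring
  rw [e2]
  linarith

lemma hasDerivAt_comp_pot {σ : (Idx19 → ℝ) → ℝ} (hσ : Differentiable ℝ σ)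
    {X : ℝ → Idx19 → ℝ} {X' : Idx19 → ℝ} {t : ℝ}
    (h : ∀ A, HasDerivAt (fun s => X s A) (X' A) t) :
    HasDerivAt (fun s => σ (X s)) (∑ A, pd σ (X t) A * X' A) t := by
  rw [← fderiv_eq_sum_pd]
  exact (hσ (X t)).hasFDerivAt.comp_hasDerivAt t (hasDerivAt_pi.2 h)

lemma hasDerivAt_comp_pd {σ : (Idx19 → ℝ) → ℝ} (hσ : ContDiff ℝ (⊤ : ℕ∞) σ)
    {X : ℝ → Idx19 → ℝ} {X' : Idx19 → ℝ} {t : ℝ}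
    (h : ∀ A, HasDerivAt (fun s => X s A) (X' A) t) (A : Idx19) :
    HasDerivAt (fun s => pd σ (X s) A) (hessB σ (X t) X' (Pi.single A 1)) t :=
  (((contDiff_top_fderiv_apply hσ (Pi.single A 1)).differentiable
    (by simp)) (X t)).hasFDerivAt.comp_hasDerivAt t (hasDerivAt_pi.2 h)

lemma hasDerivAt_Phi {F : ℝ → Mat3} {F' : Mat3} {t : ℝ}
    (h : ∀ i α, HasDerivAt (fun s => F s i α) (F' i α) t) (A : Idx19) :
    HasDerivAt (fun s => Phi (F s) A) (∑ i, ∑ α, dPhi (F t) A i α * F' i α) t := by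
  rw [← fderiv_Phi_apply]
  exact (((contDiff_Phi A (n := 1)).differentiable (by simp)) (F t)).hasFDerivAt.comp_hasDerivAt t
    (hasDerivAt_pi.2 fun i => hasDerivAt_pi.2 (h i))

/-- The relative energy density as a function of the state `(v, Ξ, τ)` and the reference
state `(v̂, Ξ̂)`. -/
def relEnergy (σI σE G : (Idx19 → ℝ) → ℝ) (v : Fin 3 → ℝ) (X τ : Idx19 → ℝ)
    (vh : Fin 3 → ℝ) (Xh : Idx19 → ℝ) : ℝ :=
  (1 / 2) * (∑ i, (v i - vh i) ^ 2) + (σI X + (∑ A, X A * τ A) + G τ) - σE Xh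
    - ∑ A, pd σE Xh A * (X A - Xh A)

lemma hasDerivAt_relEnergy {σI σE G : (Idx19 → ℝ) → ℝ} (hσI : ContDiff ℝ (⊤ : ℕ∞) σI)
    (hσE : ContDiff ℝ (⊤ : ℕ∞) σE) (hG : Differentiable ℝ G)
    {v vh : ℝ → Fin 3 → ℝ} {X Xh τ : ℝ → Idx19 → ℝ} {v' vh' : Fin 3 → ℝ} {X' Xh' τ' : Idx19 → ℝ}
    {t : ℝ}
    (hv : ∀ i, HasDerivAt (fun s => v s i) (v' i) t)
    (hvh : ∀ i, HasDerivAt (fun s => vh s i) (vh' i) t)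
    (hX : ∀ A, HasDerivAt (fun s => X s A) (X' A) t)
    (hXh : ∀ A, HasDerivAt (fun s => Xh s A) (Xh' A) t)
    (hτ : ∀ A, HasDerivAt (fun s => τ s A) (τ' A) t) :
    HasDerivAt (fun s => relEnergy σI σE G (v s) (X s) (τ s) (vh s) (Xh s))
      ((∑ i, (v t i - vh t i) * (v' i - vh' i))
        + (∑ A, (τ t A + pd σI (X t) A - pd σE (Xh t) A) * X' A)
        + (∑ A, (X t A + pd G (τ t) A) * τ' A)
        - hessB σE (Xh t) (fun A => X t A - Xh t A) Xh') t := by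
  have h1 := (HasDerivAt.fun_sum (u := Finset.univ) fun i _ =>
    ((hv i).sub (hvh i)).pow 2).const_mul (1 / 2)
  have h2 := ((hasDerivAt_comp_pot (hσI.differentiable (by simp)) hX).add
    (HasDerivAt.fun_sum (u := Finset.univ) fun A _ => (hX A).mul (hτ A))).add
    (hasDerivAt_comp_pot hG hτ)
  have h3 := hasDerivAt_comp_pot (hσE.differentiable (by simp)) hXh
  have h4 := HasDerivAt.fun_sum (u := Finset.univ) fun A _ =>
    (hasDerivAt_comp_pd hσE hXh A).mul ((hX A).sub (hXh A))
  refine (((h1.add h2).sub h3).sub h4).congr_deriv ?_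
  rw [hessB_symm hσE, hessB_sum_right hσE]
  have e1 : (1 / 2) * ∑ i, (((2 : ℕ) : ℝ) * ((fun s => v s i) - fun s => vh s i) t ^ (2 - 1)
      * (v' i - vh' i)) = ∑ i, (v t i - vh t i) * (v' i - vh' i) := by
    rw [Finset.mul_sum]
    refine Finset.sum_congr rfl fun i _ => ?_
    simp only [Pi.sub_apply]
    push_cast
    ring
  rw [e1]
  simp only [add_sub_assoc, add_assoc, add_right_inj]
  simp only [← Finset.sum_add_distrib, ← Finset.sum_sub_distrib]
  refine Finset.sum_congr rfl fun A _ => ?_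
  simp only [Pi.sub_apply]
  ring

/-- Divergence of the relative flux; the terms in which the derivative falls on `D = ∂Φ/∂F` are
recombined by the Piola identity. -/
lemma div_flux {w : Fin 3 → (Fin 3 → ℝ) → ℝ} {U V : Idx19 → (Fin 3 → ℝ) → ℝ}
    {D : Idx19 → Fin 3 → Fin 3 → (Fin 3 → ℝ) → ℝ} {x : Fin 3 → ℝ}
    (hw : ∀ i, DifferentiableAt ℝ (w i) x) (hU : ∀ A, DifferentiableAt ℝ (U A) x)
    (hV : ∀ A, DifferentiableAt ℝ (V A) x) (hD : ∀ A i α, DifferentiableAt ℝ (D A i α) x)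
    (hdiv : ∀ A i, ∑ α, fderiv ℝ (D A i α) x (Pi.single α 1) = 0) :
    ∑ α, fderiv ℝ (fun z => ∑ i, w i z * ∑ A, (U A z - V A z) * D A i α z) x (Pi.single α 1)
      = (∑ i, ∑ α, fderiv ℝ (w i) x (Pi.single α 1) * ∑ A, (U A x - V A x) * D A i α x)
        + ∑ i, w i x * ((∑ α, fderiv ℝ (fun z => ∑ A, U A z * D A i α z) x (Pi.single α 1))
          - ∑ α, ∑ A, fderiv ℝ (V A) x (Pi.single α 1) * D A i α x) := by
  have hdd : ∀ A i α, HasFDerivAt (D A i α) (fderiv ℝ (D A i α) x) x :=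
    fun A i α => (hD A i α).hasFDerivAt
  have k1 : ∀ α, fderiv ℝ (fun z => ∑ i, w i z * ∑ A, (U A z - V A z) * D A i α z) x
      (Pi.single α 1) = ∑ i, (w i x * (∑ A, ((U A x - V A x) * fderiv ℝ (D A i α) x (Pi.single α 1)
        + D A i α x * (fderiv ℝ (U A) x (Pi.single α 1) - fderiv ℝ (V A) x (Pi.single α 1))))
        + (∑ A, (U A x - V A x) * D A i α x) * fderiv ℝ (w i) x (Pi.single α 1)) := by
    intro α
    have h := (HasFDerivAt.fun_sum (u := Finset.univ) fun i _ => (hw i).hasFDerivAt.mul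
      (HasFDerivAt.fun_sum (u := Finset.univ) fun A _ =>
        (((hU A).hasFDerivAt.sub (hV A).hasFDerivAt).mul (hdd A i α)))).fderiv
    exact (DFunLike.congr_fun h (Pi.single α 1)).trans (by simp [-Fintype.sum_sum_type])
  have k2 : ∀ i α, fderiv ℝ (fun z => ∑ A, U A z * D A i α z) x (Pi.single α 1)
      = ∑ A, (U A x * fderiv ℝ (D A i α) x (Pi.single α 1)
        + D A i α x * fderiv ℝ (U A) x (Pi.single α 1)) := by
    intro i α
    have h := (HasFDerivAt.fun_sum (u := Finset.univ) fun A _ =>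
        (hU A).hasFDerivAt.mul (hdd A i α)).fderiv
    exact (DFunLike.congr_fun h (Pi.single α 1)).trans (by simp [-Fintype.sum_sum_type])
  have k3 : ∀ i, ∑ α, ∑ A, V A x * fderiv ℝ (D A i α) x (Pi.single α 1) = 0 := by
    intro i
    rw [Finset.sum_comm]
    refine Finset.sum_eq_zero fun A _ => ?_
    rw [← Finset.mul_sum, hdiv, mul_zero]
  simp only [k1, k2]
  rw [Finset.sum_comm]
  rw [← Finset.sum_add_distrib]
  refine Finset.sum_congr rfl fun i _ => ?_
  have k4 : w i x * ∑ α, ∑ A, V A x * fderiv ℝ (D A i α) x (Pi.single α 1) = 0 := by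
    rw [k3, mul_zero]
  rw [← sub_eq_zero]
  refine Eq.trans ?_ (neg_eq_zero.2 k4)
  simp only [Finset.sum_add_distrib, Finset.mul_sum, Finset.sum_mul, mul_sub, mul_add, sub_mul,
    Finset.sum_sub_distrib]
  simp only [mul_comm]
  ring

/-- Divergence of `V · ∂Φ/∂F`, by the Piola identity. -/
lemma div_piola {V : Idx19 → (Fin 3 → ℝ) → ℝ}
    {D : Idx19 → Fin 3 → Fin 3 → (Fin 3 → ℝ) → ℝ} {x : Fin 3 → ℝ}
    (hV : ∀ A, DifferentiableAt ℝ (V A) x) (hD : ∀ A i α, DifferentiableAt ℝ (D A i α) x)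
    (hdiv : ∀ A i, ∑ α, fderiv ℝ (D A i α) x (Pi.single α 1) = 0) (i : Fin 3) :
    ∑ α, fderiv ℝ (fun z => ∑ A, V A z * D A i α z) x (Pi.single α 1)
      = ∑ α, ∑ A, fderiv ℝ (V A) x (Pi.single α 1) * D A i α x := by
  have k2 : ∀ α, fderiv ℝ (fun z => ∑ A, V A z * D A i α z) x (Pi.single α 1)
      = ∑ A, (V A x * fderiv ℝ (D A i α) x (Pi.single α 1)
        + D A i α x * fderiv ℝ (V A) x (Pi.single α 1)) := by
    intro α
    have h := (HasFDerivAt.fun_sum (u := Finset.univ) fun A _ =>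
        (hV A).hasFDerivAt.mul (hD A i α).hasFDerivAt).fderiv
    exact (DFunLike.congr_fun h (Pi.single α 1)).trans (by simp [-Fintype.sum_sum_type])
  have k3 : ∑ α, ∑ A, V A x * fderiv ℝ (D A i α) x (Pi.single α 1) = 0 := by
    rw [Finset.sum_comm]
    refine Finset.sum_eq_zero fun A _ => ?_
    rw [← Finset.mul_sum, hdiv, mul_zero]
  simp only [k2, Finset.sum_add_distrib, k3, zero_add, mul_comm]

/-- Algebraic form of the relative energy balance: with `X' = D ∇v` and `Xh' = D̂ ∇v̂`, the
transport terms cancel and only error terms remain. -/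
lemma balance_algebra {w v' vh' : Fin 3 → ℝ} {gT : Fin 3 → Idx19 → ℝ}
    {D Dh : Idx19 → Fin 3 → Fin 3 → ℝ} {gu gv : Fin 3 → Fin 3 → ℝ} {Q H : Idx19 → ℝ}
    (hvh' : ∀ i, vh' i = ∑ α, ∑ A, gT α A * Dh A i α) :
    (∑ i, w i * (v' i - vh' i)) + (∑ A, Q A * ∑ i, ∑ α, D A i α * gu i α)
      - (∑ A, H A * ∑ i, ∑ α, Dh A i α * gv i α)
      - ((∑ i, ∑ α, (gu i α - gv i α) * ∑ A, Q A * D A i α)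
        + ∑ i, w i * (v' i - ∑ α, ∑ A, gT α A * D A i α))
    = ∑ i, ∑ α, ∑ A, (w i * gT α A * (D A i α - Dh A i α) + gv i α * Q A * D A i α
        - gv i α * Dh A i α * H A) := by
  have sw : ∀ f : Idx19 → Fin 3 → Fin 3 → ℝ,
      ∑ A, ∑ i, ∑ α, f A i α = ∑ i, ∑ α, ∑ A, f A i α := by
    intro f
    rw [Finset.sum_comm]
    exact Finset.sum_congr rfl fun i _ => Finset.sum_comm
  have e1 : ∑ A, Q A * ∑ i, ∑ α, D A i α * gu i α = ∑ i, ∑ α, ∑ A, Q A * (D A i α * gu i α) := by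
    simp only [Finset.mul_sum]; exact sw _
  have e2 : ∑ A, H A * ∑ i, ∑ α, Dh A i α * gv i α
      = ∑ i, ∑ α, ∑ A, H A * (Dh A i α * gv i α) := by
    simp only [Finset.mul_sum]; exact sw _
  rw [e1, e2]
  simp only [hvh', ← Finset.sum_add_distrib, ← Finset.sum_sub_distrib]
  refine Finset.sum_congr rfl fun i _ => ?_
  have e3 : ∀ a b c : ℝ, w i * (a - b) - w i * (a - c) = w i * c - w i * b := by intros; ring
  calc _ = (w i * ∑ α, ∑ A, gT α A * D A i α) - (w i * ∑ α, ∑ A, gT α A * Dh A i α)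
        + (∑ α, ∑ A, Q A * (D A i α * gu i α)) - (∑ α, ∑ A, H A * (Dh A i α * gv i α))
        - (∑ α, (gu i α - gv i α) * ∑ A, Q A * D A i α) := by ring
    _ = _ := by
      simp only [Finset.mul_sum, ← Finset.sum_add_distrib, ← Finset.sum_sub_distrib]
      refine Finset.sum_congr rfl fun α _ => Finset.sum_congr rfl fun A _ => ?_
      ring

/-! ### Entropy structure -/

/-- The standing structural assumptions: `Σ = σ_I - σ_E` is strictly convex with `∇²Σ ≤ γᵥ`,
`∇²σ_I ≥ γ_I > γᵥ`, and `G` is the integrating factor with `∇G(τ) = -(∇Σ)⁻¹(-τ)`, normalized by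
`Ψ(Ξ, -∇Σ(Ξ)) = σ_E(Ξ)`. The field `grad` states the relation for `∇G` without an inverse, as
`∇Σ(-∇G(τ)) = -τ`. -/
structure EntropyPair (γI γv : ℝ) (σI σE Sg G : (Idx19 → ℝ) → ℝ) : Prop where
  smoothI : ContDiff ℝ (⊤ : ℕ∞) σI
  smoothE : ContDiff ℝ (⊤ : ℕ∞) σE
  smoothG : ContDiff ℝ 2 G
  gap : γv < γI
  pos : 0 < γv
  eq : Sg = fun X => σI X - σE X
  hessI : ∀ X Y : Idx19 → ℝ, γI * (∑ A, Y A ^ 2) ≤ hessQ σI X Y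
  hess_le : ∀ X Y : Idx19 → ℝ, hessQ Sg X Y ≤ γv * (∑ A, Y A ^ 2)
  hess_pos : ∀ X Y : Idx19 → ℝ, Y ≠ 0 → 0 < hessQ Sg X Y
  grad : ∀ (τ : Idx19 → ℝ) (A : Idx19), pd Sg (fun B => -(pd G τ B)) A = -(τ A)
  norm : ∀ X : Idx19 → ℝ,
    σI X + (∑ A, X A * -(pd Sg X A)) + G (fun A => -(pd Sg X A)) = σE X

namespace EntropyPair

variable {γI γv : ℝ} {σI σE Sg G : (Idx19 → ℝ) → ℝ}

lemma smoothS (h : EntropyPair γI γv σI σE Sg G) : ContDiff ℝ (⊤ : ℕ∞) Sg := by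
  rw [h.eq]; exact h.smoothI.sub h.smoothE

lemma fderiv_eq (h : EntropyPair γI γv σI σE Sg G) (X Z : Idx19 → ℝ) :
    fderiv ℝ Sg X Z = fderiv ℝ σI X Z - fderiv ℝ σE X Z := by
  have h1 := (((h.smoothI.differentiable (by simp)) X).hasFDerivAt.sub
    ((h.smoothE.differentiable (by simp)) X).hasFDerivAt).fderiv
  rw [h.eq]
  exact DFunLike.congr_fun h1 Z

lemma pd_eq (h : EntropyPair γI γv σI σE Sg G) (X : Idx19 → ℝ) (A : Idx19) :
    pd Sg X A = pd σI X A - pd σE X A := h.fderiv_eq X _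

lemma hessQ_eq (h : EntropyPair γI γv σI σE Sg G) (X Y : Idx19 → ℝ) :
    hessQ Sg X Y = hessQ σI X Y - hessQ σE X Y := by
  have h0 : (fun X' => fderiv ℝ Sg X' Y) = fun X' => fderiv ℝ σI X' Y - fderiv ℝ σE X' Y :=
    funext fun X' => h.fderiv_eq X' Y
  have h1 := ((((contDiff_top_fderiv_apply h.smoothI Y).differentiable
    (by simp)) X).hasFDerivAt.sub
    (((contDiff_top_fderiv_apply h.smoothE Y).differentiable (by simp)) X).hasFDerivAt).fderiv
  unfold hessQ hessB
  rw [h0]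
  exact DFunLike.congr_fun h1 Y

lemma hess_nonneg (h : EntropyPair γI γv σI σE Sg G) (X Y : Idx19 → ℝ) : 0 ≤ hessQ Sg X Y := by
  by_cases hY : Y = 0
  · simp [hY, hessQ, hessB]
  · exact (h.hess_pos X Y hY).le

/-- `σ_E = σ_I - Σ` is uniformly convex, because `γ_I > γᵥ`. -/
lemma hessE (h : EntropyPair γI γv σI σE Sg G) (X Y : Idx19 → ℝ) :
    (γI - γv) * (∑ A, Y A ^ 2) ≤ hessQ σE X Y := by
  have h1 := h.hessI X Y
  have h2 := h.hess_le X Y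
  have h3 := h.hessQ_eq X Y
  linarith

/-- `Ψ(Ξ, τ) - σ_E(Ξ)` is the Bregman distance of `Σ` from `Ξ` to `-∇G(τ)`, hence it controls the
distance `|τ + ∇Σ(Ξ)|` to equilibrium. -/
lemma psi_lower (h : EntropyPair γI γv σI σE Sg G) (X τ : Idx19 → ℝ) :
    1 / (2 * γv) * (∑ A, (τ A + pd σI X A - pd σE X A) ^ 2)
      ≤ σI X + (∑ A, X A * τ A) + G τ - σE X := by
  have h1 := bregman_ge_grad h.smoothS h.pos h.hess_nonneg h.hess_le X (fun B => -(pd G τ B))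
  have h2 := h.norm (fun B => -(pd G τ B))
  simp only [h.grad, neg_neg] at h1 h2
  have e1 : ∑ A, (pd Sg X A - -τ A) ^ 2 = ∑ A, (τ A + pd σI X A - pd σE X A) ^ 2 :=
    Finset.sum_congr rfl fun A _ => by rw [h.pd_eq]; ring
  have e2 : ∑ A, -τ A * (X A - -pd G τ A) = - (∑ A, X A * τ A) + ∑ A, -pd G τ A * τ A := by
    rw [← Finset.sum_neg_distrib, ← Finset.sum_add_distrib]
    exact Finset.sum_congr rfl fun A _ => by ring
  rw [e1, e2, h.eq] at h1
  simp only at h1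
  linarith

/-- The entropy production controls the squared distance to equilibrium. -/
lemma dissipation (h : EntropyPair γI γv σI σE Sg G) (X τ : Idx19 → ℝ) :
    1 / γv * (∑ A, (τ A + pd σI X A - pd σE X A) ^ 2)
      ≤ ∑ A, (X A + pd G τ A) * (τ A + pd σI X A - pd σE X A) := by
  have h1 := bregman_ge_grad h.smoothS h.pos h.hess_nonneg h.hess_le X (fun B => -(pd G τ B))
  have h2 := bregman_ge_grad h.smoothS h.pos h.hess_nonneg h.hess_le (fun B => -(pd G τ B)) X
  simp only [h.grad] at h1 h2
  have e0 : ∑ A, (-τ A - pd Sg X A) ^ 2 = ∑ A, (pd Sg X A - -τ A) ^ 2 :=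
    Finset.sum_congr rfl fun A _ => by ring
  have e1 : ∑ A, (pd Sg X A - -τ A) ^ 2 = ∑ A, (τ A + pd σI X A - pd σE X A) ^ 2 :=
    Finset.sum_congr rfl fun A _ => by rw [h.pd_eq]; ring
  have e2 : ∑ A, (X A + pd G τ A) * (τ A + pd σI X A - pd σE X A)
      = - (∑ A, -τ A * (X A - -pd G τ A)) - ∑ A, pd Sg X A * (-pd G τ A - X A) := by
    rw [← Finset.sum_neg_distrib, ← Finset.sum_sub_distrib]
    exact Finset.sum_congr rfl fun A _ => by rw [h.pd_eq]; ring
  have e3 : 1 / γv * (∑ A, (τ A + pd σI X A - pd σE X A) ^ 2)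
      = 2 * (1 / (2 * γv) * (∑ A, (τ A + pd σI X A - pd σE X A) ^ 2)) := by
    have := h.pos
    field_simp
  rw [e0] at h2
  rw [e1] at h1 h2
  rw [e3, e2]
  linarith

/-- The coercivity constant of the relative energy. -/
lemma exists_coercive (h : EntropyPair γI γv σI σE Sg G) : ∃ κ > 0, ∀ v X τ vh Xh,
    κ * ((∑ i, (v i - vh i) ^ 2) + (∑ A, (X A - Xh A) ^ 2)
      + ∑ A, (τ A + pd σI X A - pd σE X A) ^ 2) ≤ relEnergy σI σE G v X τ vh Xh := by
  have hp := h.pos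
  have hg := sub_pos.2 h.gap
  refine ⟨min (1 / 2) (min ((γI - γv) / 2) (1 / (2 * γv))), by positivity, ?_⟩
  intro v X τ vh Xh
  set κ := min (1 / 2) (min ((γI - γv) / 2) (1 / (2 * γv)))
  have k1 : κ ≤ 1 / 2 := min_le_left _ _
  have k2 : κ ≤ (γI - γv) / 2 := (min_le_right _ _).trans (min_le_left _ _)
  have k3 : κ ≤ 1 / (2 * γv) := (min_le_right _ _).trans (min_le_right _ _)
  have h1 := h.psi_lower X τ
  have h2 := bregman_lower h.smoothE h.hessE X Xh
  have s1 : 0 ≤ ∑ i, (v i - vh i) ^ 2 := Finset.sum_nonneg fun _ _ => sq_nonneg _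
  have s2 : 0 ≤ ∑ A, (X A - Xh A) ^ 2 := Finset.sum_nonneg fun _ _ => sq_nonneg _
  have s3 : 0 ≤ ∑ A, (τ A + pd σI X A - pd σE X A) ^ 2 := Finset.sum_nonneg fun _ _ => sq_nonneg _
  have m1 := mul_le_mul_of_nonneg_right k1 s1
  have m2 := mul_le_mul_of_nonneg_right k2 s2
  have m3 := mul_le_mul_of_nonneg_right k3 s3
  unfold relEnergy
  linarith

/-- At a common state in equilibrium the relative energy vanishes. -/
lemma relEnergy_eq_zero (h : EntropyPair γI γv σI σE Sg G) (v : Fin 3 → ℝ) {X τ : Idx19 → ℝ}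
    (hτ : ∀ A, τ A = pd σE X A - pd σI X A) : relEnergy σI σE G v X τ v X = 0 := by
  have h1 := h.norm X
  have e : (fun A => -(pd Sg X A)) = τ := funext fun A => by rw [h.pd_eq, hτ]; ring
  have e2 : ∀ A, -(pd Sg X A) = τ A := fun A => congrFun e A
  rw [e] at h1
  simp only [e2] at h1
  unfold relEnergy
  simp only [sub_self, mul_zero, Finset.sum_const_zero, ne_eq, OfNat.ofNat_ne_zero,
    not_false_eq_true, zero_pow]
  linarith

/-- `|τ - τ_∞(Ξ̂)|²` is controlled by the distance to equilibrium and by `|Ξ - Ξ̂|²`, since `∇Σ` is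
`γᵥ`-Lipschitz. -/
lemma tau_sub_le (h : EntropyPair γI γv σI σE Sg G) (X τ Xh : Idx19 → ℝ) :
    ∑ A, (τ A - (pd σE Xh A - pd σI Xh A)) ^ 2
      ≤ 2 * (∑ A, (τ A + pd σI X A - pd σE X A) ^ 2)
        + 2 * γv ^ 2 * ∑ A, (X A - Xh A) ^ 2 := by
  have hp := h.pos
  have h1 := bregman_ge_grad h.smoothS h.pos h.hess_nonneg h.hess_le X Xh
  have h2 := bregman_upper h.smoothS h.hess_le X Xh
  have h3 : ∑ A, (pd Sg X A - pd Sg Xh A) ^ 2 ≤ γv ^ 2 * ∑ A, (X A - Xh A) ^ 2 := by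
    have h4 := mul_le_mul_of_nonneg_left (h1.trans h2) (by positivity : 0 ≤ 2 * γv)
    have e1 : 2 * γv * (1 / (2 * γv) * ∑ A, (pd Sg X A - pd Sg Xh A) ^ 2)
      = ∑ A, (pd Sg X A - pd Sg Xh A) ^ 2 := by field_simp
    have e2 : 2 * γv * (γv / 2 * ∑ A, (X A - Xh A) ^ 2)
      = γv ^ 2 * ∑ A, (X A - Xh A) ^ 2 := by ring
    rwa [e1, e2] at h4
  have h5 : ∑ A, (τ A - (pd σE Xh A - pd σI Xh A)) ^ 2
      ≤ ∑ A, (2 * (τ A + pd σI X A - pd σE X A) ^ 2 + 2 * (pd Sg X A - pd Sg Xh A) ^ 2) := by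
    refine Finset.sum_le_sum fun A _ => ?_
    rw [h.pd_eq, h.pd_eq]
    have := sq_nonneg ((τ A + pd σI X A - pd σE X A)
      + ((pd σI X A - pd σE X A) - (pd σI Xh A - pd σE Xh A)))
    linarith
  rw [Finset.sum_add_distrib, ← Finset.mul_sum, ← Finset.mul_sum] at h5
  linarith

end EntropyPair

/-! ### Pointwise relative energy inequality -/

/-- The space-time density of the relative energy; the internal variable is
`τ = T - ∇σ_I(Φ(F))`. -/
def eDens (σI σE G : (Idx19 → ℝ) → ℝ) (v vh : SpT → Fin 3 → ℝ) (F Fh : SpT → Mat3)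
    (S : SpT → Idx19 → ℝ) (q : SpT) : ℝ :=
  relEnergy σI σE G (v q) (Phi (F q)) (fun A => S q A - pd σI (Phi (F q)) A) (vh q) (Phi (Fh q))

/-- The flux of the relative energy, `(vᵢ - v̂ᵢ)(T^A - ∂σ_E/∂Ξ^A(Φ(F̂))) ∂Φ^A/∂F_{iα}(F)`. -/
def eFlux (σE : (Idx19 → ℝ) → ℝ) (v vh : SpT → Fin 3 → ℝ) (F Fh : SpT → Mat3)
    (S : SpT → Idx19 → ℝ) (α : Fin 3) (q : SpT) : ℝ :=
  ∑ i, (v q i - vh q i) * ∑ A, (S q A - pd σE (Phi (Fh q)) A) * dPhi (F q) A i α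

lemma contDiff_pd_comp {σ : (Idx19 → ℝ) → ℝ} (hσ : ContDiff ℝ (⊤ : ℕ∞) σ) {F : SpT → Mat3}
    (hF : ContDiff ℝ 1 F) (A : Idx19) : ContDiff ℝ 1 (fun q => pd σ (Phi (F q)) A) :=
  ((contDiff_top_fderiv_apply hσ (Pi.single A 1)).of_le (by simp)).comp
    (contDiff_pi.2 fun B => (contDiff_Phi B).comp hF)

lemma contDiff_Phi_comp {F : SpT → Mat3} (hF : ContDiff ℝ 1 F) :
    ContDiff ℝ 1 (fun q => Phi (F q)) :=
  contDiff_pi.2 fun B => (contDiff_Phi B).comp hF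

lemma contDiff_eDens {σI σE G : (Idx19 → ℝ) → ℝ} (hσI : ContDiff ℝ (⊤ : ℕ∞) σI)
    (hσE : ContDiff ℝ (⊤ : ℕ∞) σE) (hG : ContDiff ℝ 2 G)
    {v vh : SpT → Fin 3 → ℝ} {F Fh : SpT → Mat3} {S : SpT → Idx19 → ℝ}
    (hv : ContDiff ℝ 1 v) (hvh : ContDiff ℝ 1 vh) (hF : ContDiff ℝ 1 F) (hFh : ContDiff ℝ 1 Fh)
    (hS : ContDiff ℝ 1 S) : ContDiff ℝ 1 (eDens σI σE G v vh F Fh S) := by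
  have h1 := contDiff_pi.1 hv
  have h2 := contDiff_pi.1 hvh
  have h3 := contDiff_Phi_comp hF
  have h4 := contDiff_Phi_comp hFh
  have h5 := contDiff_pi.1 h3
  have h6 := contDiff_pi.1 h4
  have hτ : ∀ A, ContDiff ℝ 1 (fun q => S q A - pd σI (Phi (F q)) A) := fun A =>
    (contDiff_pi.1 hS A).sub (contDiff_pd_comp hσI hF A)
  unfold eDens relEnergy
  refine ((ContDiff.add ?_ ((ContDiff.add ?_ ?_).add ?_)).sub ?_).sub ?_
  · exact contDiff_const.mul (ContDiff.sum fun i _ => ((h1 i).sub (h2 i)).pow 2)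
  · exact (hσI.of_le (by simp)).comp h3
  · exact ContDiff.sum fun A _ => (h5 A).mul (hτ A)
  · exact (hG.of_le (by norm_num)).comp (contDiff_pi.2 hτ)
  · exact (hσE.of_le (by simp)).comp h4
  · exact ContDiff.sum fun A _ => (contDiff_pd_comp hσE hFh A).mul ((h5 A).sub (h6 A))

lemma contDiff_eFlux {σE : (Idx19 → ℝ) → ℝ} (hσE : ContDiff ℝ (⊤ : ℕ∞) σE)
    {v vh : SpT → Fin 3 → ℝ} {F Fh : SpT → Mat3} {S : SpT → Idx19 → ℝ}
    (hv : ContDiff ℝ 1 v) (hvh : ContDiff ℝ 1 vh) (hF : ContDiff ℝ 1 F) (hFh : ContDiff ℝ 1 Fh)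
    (hS : ContDiff ℝ 1 S) (α : Fin 3) : ContDiff ℝ 1 (eFlux σE v vh F Fh S α) := by
  have h1 := contDiff_pi.1 hv
  have h2 := contDiff_pi.1 hvh
  unfold eFlux
  exact ContDiff.sum fun i _ => ((h1 i).sub (h2 i)).mul (ContDiff.sum fun A _ =>
    ((contDiff_pi.1 hS A).sub (contDiff_pd_comp hσE hFh A)).mul ((contDiff_dPhi A i α).comp hF))

lemma abs_le_sqrt_sum {ι : Type*} [Fintype ι] (f : ι → ℝ) (i : ι) : |f i| ≤ √(∑ j, f j ^ 2) :=
  Real.abs_le_sqrt (Finset.single_le_sum (f := fun j => f j ^ 2) (fun _ _ => sq_nonneg _)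
    (Finset.mem_univ i))

/-- Pointwise form of the relative energy inequality: the exact balance of the relative energy,
with its error terms estimated and the term linear in the distance to equilibrium absorbed by the
entropy production at the price of `O(ε)`. -/
lemma balance {γI γv M : ℝ} {σI σE Sg G : (Idx19 → ℝ) → ℝ}
    (h : EntropyPair γI γv σI σE Sg G) (hM : 0 < M)
    (h2a : ∀ X Y Z : Idx19 → ℝ,
      |hessB σE X Y Z| ≤ M * Real.sqrt (∑ A, Y A ^ 2) * Real.sqrt (∑ A, Z A ^ 2))
    (h2b : ∀ X Y Z W : Idx19 → ℝ,
      |d3B σE X Y Z W| ≤ M * Real.sqrt (∑ A, Y A ^ 2) * Real.sqrt (∑ A, Z A ^ 2)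
          * Real.sqrt (∑ A, W A ^ 2))
    {κ : ℝ} (hκ : 0 < κ) (hcoer : ∀ v X τ vh Xh,
      κ * ((∑ i, (v i - vh i) ^ 2) + (∑ A, (X A - Xh A) ^ 2)
        + ∑ A, (τ A + pd σI X A - pd σE X A) ^ 2) ≤ relEnergy σI σE G v X τ vh Xh)
    {v vh : SpT → Fin 3 → ℝ} {F Fh : SpT → Mat3} {S : SpT → Idx19 → ℝ}
    (hv : ContDiff ℝ 1 v) (hvh : ContDiff ℝ 1 vh) (hF : ContDiff ℝ 1 F) (hFh : ContDiff ℝ 1 Fh)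
    (hS : ContDiff ℝ 1 S) {ε : ℝ} (hε : 0 < ε) {x : Fin 3 → ℝ} {t : ℝ}
    (hsymm : ∀ i α β, fderiv ℝ (fun z => F (z, t) i α) x (Pi.single β 1)
      = fderiv ℝ (fun z => F (z, t) i β) x (Pi.single α 1))
    (hsymmh : ∀ i α β, fderiv ℝ (fun z => Fh (z, t) i α) x (Pi.single β 1)
      = fderiv ℝ (fun z => Fh (z, t) i β) x (Pi.single α 1))
    (heq1 : ∀ i, deriv (fun s => v (x, s) i) t =
        ∑ α, fderiv ℝ (fun z => ∑ A, S (z, t) A * dPhi (F (z, t)) A i α) x (Pi.single α 1))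
    (heq2 : ∀ i α, deriv (fun s => F (x, s) i α) t
      = fderiv ℝ (fun z => v (z, t) i) x (Pi.single α 1))
    (heq3 : ∀ A, deriv (fun s => S (x, s) A - pd σI (Phi (F (x, s))) A) t =
        -(1 / ε) * (S (x, t) A - pd σE (Phi (F (x, t))) A))
    (hheq1 : ∀ i, deriv (fun s => vh (x, s) i) t =
        ∑ α, fderiv ℝ (fun z => ∑ A, pd σE (Phi (Fh (z, t))) A * dPhi (Fh (z, t)) A i α) x
          (Pi.single α 1))
    (hheq2 : ∀ i α, deriv (fun s => Fh (x, s) i α) t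
      = fderiv ℝ (fun z => vh (z, t) i) x (Pi.single α 1))
    {b B : ℝ} (hB : 0 ≤ B) (hbB : b ≤ B)
    (hb : ∀ i α, |fderiv ℝ (fun z => vh (z, t) i) x (Pi.single α 1)| ≤ b)
    (hBT : ∀ α A, |fderiv ℝ (fun z => pd σE (Phi (Fh (z, t))) A) x (Pi.single α 1)| ≤ B)
    (hBD : ∀ A i α, |dPhi (Fh (x, t)) A i α| ≤ B) :
    fderiv ℝ (eDens σI σE G v vh F Fh S) (x, t) (0, 1)
        - ∑ α, fderiv ℝ (eFlux σE v vh F Fh S α) (x, t) (Pi.single α 1, 0)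
      ≤ 171 * (4 * B + M / 2 * B ^ 2 + 4 * M * B) / κ * eDens σI σE G v vh F Fh S (x, t)
        + ε * (γv * (171 * b * B) ^ 2 / 4) := by
  have hσI := h.smoothI
  have hσE := h.smoothE
  have he := contDiff_eDens hσI hσE h.smoothG hv hvh hF hFh hS
  have hf := contDiff_eFlux hσE hv hvh hF hFh hS
  have tder : ∀ {f : SpT → ℝ}, ContDiff ℝ 1 f → HasDerivAt (fun s => f (x, s))
      (deriv (fun s => f (x, s)) t) t := fun hf =>
    (hasDerivAt_time hf x t).differentiableAt.hasDerivAt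
  have sder : ∀ {f : SpT → ℝ}, ContDiff ℝ 1 f → DifferentiableAt ℝ (fun z => f (z, t)) x :=
    fun hf => (hasFDerivAt_space hf x t).differentiableAt
  have cF : ∀ i α, ContDiff ℝ 1 (fun q => F q i α) := fun i α =>
    contDiff_pi.1 (contDiff_pi.1 hF i) α
  have cFh : ∀ i α, ContDiff ℝ 1 (fun q => Fh q i α) := fun i α =>
    contDiff_pi.1 (contDiff_pi.1 hFh i) α
  have cV := contDiff_pd_comp hσE hFh
  set X := Phi (F (x, t)) with hX
  set Xh := Phi (Fh (x, t)) with hXh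
  set τ : Idx19 → ℝ := fun A => S (x, t) A - pd σI X A with hτ
  set w : Fin 3 → ℝ := fun i => v (x, t) i - vh (x, t) i with hw
  set D := dPhi (F (x, t)) with hD
  set Dh := dPhi (Fh (x, t)) with hDh
  set gu : Fin 3 → Fin 3 → ℝ :=
    fun i α => fderiv ℝ (fun z => v (z, t) i) x (Pi.single α 1) with hgu
  set gv : Fin 3 → Fin 3 → ℝ :=
    fun i α => fderiv ℝ (fun z => vh (z, t) i) x (Pi.single α 1) with hgv
  set gT : Fin 3 → Idx19 → ℝ :=
    fun α A => fderiv ℝ (fun z => pd σE (Phi (Fh (z, t))) A) x (Pi.single α 1) with hgT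
  set r : Idx19 → ℝ := fun A => τ A + pd σI X A - pd σE X A with hr
  set R : Idx19 → ℝ := fun A => pd σE X A - pd σE Xh A with hR
  set H : Idx19 → ℝ := fun A => hessB σE Xh (X - Xh) (Pi.single A 1) with hH
  -- time derivative of the density
  have d1 := hasDerivAt_relEnergy hσI hσE (h.smoothG.differentiable (by norm_num))
    (fun i => tder (contDiff_pi.1 hv i)) (fun i => tder (contDiff_pi.1 hvh i))
    (hasDerivAt_Phi fun i α => tder (cF i α)) (hasDerivAt_Phi fun i α => tder (cFh i α))
    (fun A => tder ((contDiff_pi.1 hS A).sub (contDiff_pd_comp hσI hF A)))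
  have d2 := (hasDerivAt_time he x t).unique d1
  -- divergence of the flux
  have pio := piola (F := fun z => F (z, t)) (x := x)
    (differentiableAt_pi.2 fun i => differentiableAt_pi.2 fun α => sder (cF i α)) hsymm
  have pioh := piola (F := fun z => Fh (z, t)) (x := x)
    (differentiableAt_pi.2 fun i => differentiableAt_pi.2 fun α => sder (cFh i α)) hsymmh
  have d3 := div_flux (x := x) (w := fun i z => v (z, t) i - vh (z, t) i)
    (U := fun A z => S (z, t) A) (V := fun A z => pd σE (Phi (Fh (z, t))) A)
    (D := fun A i α z => dPhi (F (z, t)) A i α)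
    (fun i => (sder (contDiff_pi.1 hv i)).sub (sder (contDiff_pi.1 hvh i)))
    (fun A => sder (contDiff_pi.1 hS A)) (fun A => sder (cV A))
    (fun A i α => sder ((contDiff_dPhi A i α).comp hF)) pio
  have d4 : ∀ α, fderiv ℝ (eFlux σE v vh F Fh S α) (x, t) (Pi.single α 1, 0)
      = fderiv ℝ (fun z => ∑ i, (v (z, t) i - vh (z, t) i) * ∑ A,
        (S (z, t) A - pd σE (Phi (Fh (z, t))) A) * dPhi (F (z, t)) A i α) x (Pi.single α 1) :=
    fun α => (fderiv_space (hf α) x t _).symm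
  have d5 := div_piola (x := x) (V := fun A z => pd σE (Phi (Fh (z, t))) A)
    (D := fun A i α z => dPhi (Fh (z, t)) A i α) (fun A => sder (cV A))
    (fun A i α => sder ((contDiff_dPhi A i α).comp hFh)) pioh
  have d6 : ∀ i α, fderiv ℝ (fun z => v (z, t) i - vh (z, t) i) x (Pi.single α 1)
      = gu i α - gv i α := fun i α =>
    DFunLike.congr_fun ((sder (contDiff_pi.1 hv i)).hasFDerivAt.sub
      (sder (contDiff_pi.1 hvh i)).hasFDerivAt).fderiv _
  have hvh' : ∀ i, deriv (fun s => vh (x, s) i) t = ∑ α, ∑ A, gT α A * Dh A i α := fun i =>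
    (hheq1 i).trans (d5 i)
  have Qeq : ∀ A, τ A + pd σI X A - pd σE Xh A = r A + R A := fun A => by
    simp only [hr, hR]; ring
  have Qeq2 : ∀ A, S (x, t) A - pd σE Xh A = r A + R A := fun A => by
    simp only [hr, hR, hτ]; ring
  have req : ∀ A, S (x, t) A - pd σE X A = r A := fun A => by
    simp only [hr, hτ]; ring
  have key := balance_algebra (w := w) (v' := fun i => deriv (fun s => v (x, s) i) t)
    (D := D) (gu := gu) (gv := gv) (Q := fun A => r A + R A) (H := H) hvh'
  simp only [heq1] at key
  have tot : fderiv ℝ (eDens σI σE G v vh F Fh S) (x, t) (0, 1)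
        - ∑ α, fderiv ℝ (eFlux σE v vh F Fh S α) (x, t) (Pi.single α 1, 0)
      = (∑ i, ∑ α, ∑ A, (w i * gT α A * (D A i α - Dh A i α) + gv i α * (r A + R A) * D A i α
        - gv i α * Dh A i α * H A)) + -(1 / ε) * ∑ A, (X A + pd G τ A) * r A := by
    rw [d2, Finset.sum_congr rfl fun α _ => d4 α, d3, ← key,
      hessB_sum_right hσE]
    have a1 : ∀ A, deriv (fun s => S (x, s) A - pd σI (Phi (F (x, s))) A) t = -(1 / ε) * r A :=
      fun A => (heq3 A).trans (by rw [req])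
    have a2 : ∑ A, (X A + pd G τ A) * (-(1 / ε) * r A)
        = -(1 / ε) * ∑ A, (X A + pd G τ A) * r A := by
      rw [Finset.mul_sum]
      exact Finset.sum_congr rfl fun A _ => by ring
    rw [← a2]
    simp only [heq1, heq2, hheq2, a1, d6]
    simp only [← Qeq2, hτ, sub_add_cancel]
    exact (by intros; ring : ∀ a b c d f : ℝ, a + b + c - d - f = a + b - d - f + c) _ _ _ _ _
  have hdis := h.dissipation X τ
  have hco := hcoer (v (x, t)) X τ (vh (x, t)) Xh
  set P := ∑ A, (X A - Xh A) ^ 2 with hP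
  have hP0 : 0 ≤ P := Finset.sum_nonneg fun _ _ => sq_nonneg _
  have err := error_sum_le (W := √(∑ i, w i ^ 2)) (p := √P) (ρ := √(∑ A, r A ^ 2)) (M := M) hbB
    (w := w) (gT := gT) (D := D) (Dh := Dh) (gv := gv) (r := r) (S := R) (H := H)
    (abs_le_sqrt_sum w) hBT (fun A i α => dPhi_sub_le _ _ A i α) hBD hb (abs_le_sqrt_sum r)
    (fun A => pd_lipschitz hσE h2a X Xh A)
    (fun A => by rw [Real.sq_sqrt hP0]; exact pd_taylor hσE h2b X Xh A)
  have abso := absorb (W := √(∑ i, w i ^ 2)) (p := √P) (ρ := √(∑ A, r A ^ 2)) (b := b) (B := B)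
    (e := eDens σI σE G v vh F Fh S (x, t)) hκ h.pos hε hB hM.le (by
      rw [Real.sq_sqrt hP0, Real.sq_sqrt (Finset.sum_nonneg fun _ _ => sq_nonneg _),
        Real.sq_sqrt (Finset.sum_nonneg fun _ _ => sq_nonneg _)]
      exact hco)
  rw [Real.sq_sqrt (Finset.sum_nonneg fun _ _ => sq_nonneg (r _))] at abso
  have hdis' := mul_le_mul_of_nonneg_left hdis (by positivity : 0 ≤ 1 / ε)
  rw [tot]
  linarith

/-! ### Reference solution and states at rest -/

/-- Second derivatives of the motion commute, so the rows of `F = ∇y` are curl-free. -/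
lemma grad_symm {y : (Fin 3 → ℝ) → ℝ → Fin 3 → ℝ}
    (hy : ContDiff ℝ (⊤ : ℕ∞) (fun q : SpT => y q.1 q.2)) {F : (Fin 3 → ℝ) → Mat3} {t : ℝ}
    (hF : ∀ x i α, F x i α = fderiv ℝ (fun z => y z t i) x (Pi.single α 1)) (x : Fin 3 → ℝ)
    (i α β : Fin 3) : fderiv ℝ (fun z => F z i α) x (Pi.single β 1)
      = fderiv ℝ (fun z => F z i β) x (Pi.single α 1) := by
  have hf : ContDiff ℝ 2 (fun z => y z t i) :=
    ((contDiff_pi.1 hy i).of_le (by norm_cast)).comp (contDiff_id.prodMk contDiff_const)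
  have hd : DifferentiableAt ℝ (fderiv ℝ (fun z => y z t i)) x :=
    (hf.fderiv_right (m := 1) (by norm_num)).differentiable (by simp) x
  have key : ∀ Y Z : Fin 3 → ℝ, fderiv ℝ (fun z => fderiv ℝ (fun z => y z t i) z Z) x Y
      = fderiv ℝ (fderiv ℝ (fun z => y z t i)) x Y Z := by
    intro Y Z
    rw [fderiv_clm_apply hd (by fun_prop)]
    simp
  have hs : IsSymmSndFDerivAt ℝ (fun z => y z t i) x := hf.contDiffAt.isSymmSndFDerivAt (by simp)
  simp only [hF, key]
  exact hs _ _

/-- Finitely many continuous functions are bounded, by a common constant, on `K × [0, T]`. -/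
lemma exists_bound {ι : Type*} [Fintype ι] {f : ι → SpT → ℝ} (hf : ∀ i, Continuous (f i))
    {K : Set (Fin 3 → ℝ)} (hK : IsCompact K) (T : ℝ) :
    ∃ B, 0 ≤ B ∧ ∀ i, ∀ x ∈ K, ∀ t ∈ Set.Icc 0 T, |f i (x, t)| ≤ B := by
  obtain ⟨B, hB⟩ := (hK.prod (isCompact_Icc (a := (0 : ℝ)) (b := T))).exists_bound_of_continuousOn
    (f := fun q i => f i q) (continuous_pi hf).continuousOn
  refine ⟨max B 0, le_max_right _ _, fun i x hx t ht => ?_⟩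
  exact (norm_le_pi_norm (fun i => f i (x, t)) i).trans
    ((hB (x, t) ⟨hx, ht⟩).trans (le_max_left _ _))

/-- The reference solution has bounded gradients, and its velocity gradient vanishes off the
support set `K`. -/
lemma reference_bounds {σE : (Idx19 → ℝ) → ℝ} (hσE : ContDiff ℝ (⊤ : ℕ∞) σE)
    {vh : SpT → Fin 3 → ℝ} {Fh : SpT → Mat3} (hvh : ContDiff ℝ 1 vh) (hFh : ContDiff ℝ 1 Fh)
    {K : Set (Fin 3 → ℝ)} (hK : IsCompact K) {T : ℝ}
    (h0 : ∀ t ∈ Set.Icc 0 T, ∀ x, x ∉ K → vh (x, t) = 0 ∧ Fh (x, t) = 0) :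
    ∃ B, 0 ≤ B ∧ ∀ t ∈ Set.Icc 0 T, ∀ x,
      (∀ i α, |fderiv ℝ (fun z => vh (z, t) i) x (Pi.single α 1)| ≤ K.indicator (fun _ => B) x) ∧
      (∀ α A, |fderiv ℝ (fun z => pd σE (Phi (Fh (z, t))) A) x (Pi.single α 1)| ≤ B) ∧
      (∀ A i α, |dPhi (Fh (x, t)) A i α| ≤ B) := by
  have cv := contDiff_pi.1 hvh
  have cT := contDiff_pd_comp hσE hFh
  obtain ⟨B₁, p1, hB₁⟩ := exists_bound
    (f := fun (k : Fin 3 × Fin 3) q => fderiv ℝ (fun q => vh q k.1) q (Pi.single k.2 1, 0))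
    (fun k => continuous_fderiv_dir (cv k.1) _) hK T
  obtain ⟨B₂, p2, hB₂⟩ := exists_bound
    (f := fun (k : Fin 3 × Idx19) q =>
      fderiv ℝ (fun q => pd σE (Phi (Fh q)) k.2) q (Pi.single k.1 1, 0))
    (fun k => continuous_fderiv_dir (cT k.2) _) hK T
  obtain ⟨B₃, p3, hB₃⟩ := exists_bound
    (f := fun (k : Idx19 × Fin 3 × Fin 3) q => dPhi (Fh q) k.1 k.2.1 k.2.2)
    (fun k => ((contDiff_dPhi (n := 1) k.1 k.2.1 k.2.2).comp hFh).continuous) hK T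
  -- Off `K` the coefficient `∂Φ/∂F(F̂)` is the constant `∂Φ/∂F(0)`.
  obtain ⟨B₄, p4, hB₄⟩ : ∃ B₄, 0 ≤ B₄ ∧ ∀ A i α, |dPhi 0 A i α| ≤ B₄ :=
    ⟨‖fun k : Idx19 × Fin 3 × Fin 3 => dPhi 0 k.1 k.2.1 k.2.2‖, norm_nonneg _, fun A i α =>
      norm_le_pi_norm (fun k : Idx19 × Fin 3 × Fin 3 => dPhi 0 k.1 k.2.1 k.2.2) (A, i, α)⟩
  refine ⟨B₁ + B₂ + B₃ + B₄, by positivity, fun t ht x => ?_⟩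
  by_cases hx : x ∈ K
  · refine ⟨fun i α => ?_, fun α A => ?_, fun A i α => ?_⟩
    · rw [fderiv_space (cv i), Set.indicator_of_mem hx]
      linarith [hB₁ (i, α) x hx t ht]
    · rw [fderiv_space (cT A)]
      linarith [hB₂ (α, A) x hx t ht]
    · linarith [hB₃ (A, i, α) x hx t ht]
  · refine ⟨fun i α => ?_, fun α A => ?_, fun A i α => ?_⟩
    · rw [fderiv_zero_off hK.isClosed (fun z hz => by simp [(h0 t ht z hz).1]) hx,
        Set.indicator_of_notMem hx]
      simp
    · have e : fderiv ℝ (fun z => pd σE (Phi (Fh (z, t))) A) x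
          = fderiv ℝ (fun z => pd σE (Phi (Fh (z, t))) A - pd σE (Phi 0) A) x :=
        (fderiv_sub_const _).symm
      rw [e, fderiv_zero_off hK.isClosed (fun z hz => by simp [(h0 t ht z hz).2]) hx]
      simp only [zero_apply, abs_zero]
      positivity
    · rw [(h0 t ht x hx).2]
      linarith [hB₄ A i α]

/-- At rest the equilibrium stress vanishes: outside the support set `K` the relaxation equation
reduces to this identity. -/
lemma rest_stress {σI σE : (Idx19 → ℝ) → ℝ} {F : SpT → Mat3} {S : SpT → Idx19 → ℝ}
    {ε T : ℝ} (hε : 0 < ε) (hT : 0 < T) {K : Set (Fin 3 → ℝ)} (hK : IsCompact K)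
    (h0 : ∀ t ∈ Set.Icc 0 T, ∀ x, x ∉ K → F (x, t) = 0 ∧ S (x, t) = 0)
    (heq3 : ∀ x, ∀ t ∈ Set.Icc (0 : ℝ) T, ∀ A,
      deriv (fun s => S (x, s) A - pd σI (Phi (F (x, s))) A) t =
        -(1 / ε) * (S (x, t) A - pd σE (Phi (F (x, t))) A)) (A : Idx19) :
    pd σE (Phi 0) A = 0 := by
  obtain ⟨x, hx⟩ : ∃ x, x ∉ K := by
    by_contra! hcon
    exact hK.ne_univ (Set.eq_univ_of_forall hcon)
  have ht : T / 2 ∈ Set.Ioo 0 T := ⟨by linarith, by linarith⟩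
  have hloc : (fun s => S (x, s) A - pd σI (Phi (F (x, s))) A)
      =ᶠ[nhds (T / 2)] fun _ => 0 - pd σI (Phi 0) A := by
    filter_upwards [Ioo_mem_nhds ht.1 ht.2] with s hs
    have := h0 s ⟨hs.1.le, hs.2.le⟩ x hx
    simp [this.1, this.2]
  have h1 := heq3 x (T / 2) ⟨ht.1.le, ht.2.le⟩ A
  have h2 := h0 (T / 2) ⟨ht.1.le, ht.2.le⟩ x hx
  rw [hloc.deriv_eq, deriv_const, h2.1, h2.2] at h1
  have : (1 / ε) * pd σE (Phi 0) A = 0 := by simpa using h1.symm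
  exact (mul_eq_zero.1 this).resolve_left (by positivity)

/-! ### Stability and convergence -/

/-- Theorem 4.1 of the paper: under hypotheses (h₁), (h₂) on the polyconvex
potentials `σ_I, σ_E`, smooth solutions `(v^ε, F^ε, T^ε)` (with `F^ε = ∇y^ε`,
decaying fast in `x`, uniformly bounded initial energy) of the stress
relaxation system (relpoly) satisfy the relative-energy stability estimate
`∫ e_r(t) ≤ C(∫ e_r(0) + ε)` with `C` independent of `ε`, when compared with a
smooth solution `(v̂, F̂)` (with `F̂ = ∇ŷ`, decaying fast) of polyconvex
elastodynamics; in particular, if `∫ e_r(0) → 0` then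
`sup_{t∈[0,T]} ∫ |v^ε−v̂|² + |F^ε−F̂|² + |τ^ε−τ_∞(F̂)|² → 0` as `ε → 0`. -/
theorem statement_11
    (Tf γI γv M : ℝ) (hTf : 0 < Tf) (hγ : γv < γI) (hγv : 0 < γv) (hM : 0 < M)
    (σI σE : (Idx19 → ℝ) → ℝ)
    (hσI : ContDiff ℝ (⊤ : ℕ∞) σI) (hσE : ContDiff ℝ (⊤ : ℕ∞) σE)
    (Sg : (Idx19 → ℝ) → ℝ) (hSgdef : Sg = fun X => σI X - σE X)
    -- hypothesis (h₁): ∇²σ_I ≥ γ_I·Id > γ_v·Id ≥ ∇²Σ > 0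
    (h1a : ∀ X Y : Idx19 → ℝ, γI * (∑ A, Y A ^ 2) ≤ hessQ σI X Y)
    (h1b : ∀ X Y : Idx19 → ℝ, hessQ Sg X Y ≤ γv * (∑ A, Y A ^ 2))
    (h1c : ∀ X Y : Idx19 → ℝ, Y ≠ 0 → 0 < hessQ Sg X Y)
    -- hypothesis (h₂): |∇²σ_E| ≤ M, |∇³σ_E| ≤ M
    (h2a : ∀ X Y Z : Idx19 → ℝ,
      |hessB σE X Y Z| ≤
        M * Real.sqrt (∑ A, Y A ^ 2) * Real.sqrt (∑ A, Z A ^ 2))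
    (h2b : ∀ X Y Z W : Idx19 → ℝ,
      |d3B σE X Y Z W| ≤
        M * Real.sqrt (∑ A, Y A ^ 2) * Real.sqrt (∑ A, Z A ^ 2)
          * Real.sqrt (∑ A, W A ^ 2))
    -- (h₀): ∇Σ is onto
    (honto : Function.Surjective (fun X : Idx19 → ℝ => (fun A => pd Sg X A)))
    -- the convex integrating factor G, with ∇G(τ) = −(∇Σ)⁻¹(−τ)
    (G : (Idx19 → ℝ) → ℝ) (hGsm : ContDiff ℝ 2 G) (hGconv : ConvexOn ℝ Set.univ G)
    (hGgrad : ∀ (τ : Idx19 → ℝ) (A : Idx19), pd Sg (fun B => -(pd G τ B)) A = -(τ A))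
    -- the entropy Ψ(Ξ,τ) = σ_I(Ξ) + Ξ·τ + G(τ), normalized so Ψ(Ξ,−∇Σ(Ξ)) = σ_E(Ξ)
    (Ψ : (Idx19 → ℝ) → (Idx19 → ℝ) → ℝ)
    (hΨdef : ∀ X Y : Idx19 → ℝ, Ψ X Y = σI X + (∑ A, X A * Y A) + G Y)
    (hΨnorm : ∀ X : Idx19 → ℝ, Ψ X (fun A => -(pd Sg X A)) = σE X)
    -- the family of smooth solutions of the relaxation system
    (v : ℝ → (Fin 3 → ℝ) → ℝ → Fin 3 → ℝ)
    (Fm : ℝ → (Fin 3 → ℝ) → ℝ → Mat3)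
    (TT : ℝ → (Fin 3 → ℝ) → ℝ → Idx19 → ℝ)
    (hsm : ∀ ε, 0 < ε →
      ContDiff ℝ (⊤ : ℕ∞) (fun q : (Fin 3 → ℝ) × ℝ => v ε q.1 q.2) ∧
      ContDiff ℝ (⊤ : ℕ∞) (fun q : (Fin 3 → ℝ) × ℝ => Fm ε q.1 q.2) ∧
      ContDiff ℝ (⊤ : ℕ∞) (fun q : (Fin 3 → ℝ) × ℝ => TT ε q.1 q.2))
    (hgrad : ∀ ε, 0 < ε → ∃ y : (Fin 3 → ℝ) → ℝ → Fin 3 → ℝ,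
      ContDiff ℝ (⊤ : ℕ∞) (fun q : (Fin 3 → ℝ) × ℝ => y q.1 q.2) ∧
      ∀ x t i α, Fm ε x t i α = fderiv ℝ (fun z => y z t i) x (Pi.single α 1))
    (heq1 : ∀ ε, 0 < ε → ∀ x, ∀ t ∈ Set.Icc (0 : ℝ) Tf, ∀ i,
      deriv (fun s => v ε x s i) t =
        ∑ α, fderiv ℝ (fun z => ∑ A, TT ε z t A * dPhi (Fm ε z t) A i α) x
          (Pi.single α 1))
    (heq2 : ∀ ε, 0 < ε → ∀ x, ∀ t ∈ Set.Icc (0 : ℝ) Tf, ∀ i α,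
      deriv (fun s => Fm ε x s i α) t = fderiv ℝ (fun z => v ε z t i) x (Pi.single α 1))
    (heq3 : ∀ ε, 0 < ε → ∀ x, ∀ t ∈ Set.Icc (0 : ℝ) Tf, ∀ A,
      deriv (fun s => TT ε x s A - pd σI (Phi (Fm ε x s)) A) t =
        -(1 / ε) * (TT ε x t A - pd σE (Phi (Fm ε x t)) A))
    -- the smooth solution of polyconvex elastodynamics
    (vh : (Fin 3 → ℝ) → ℝ → Fin 3 → ℝ) (Fh : (Fin 3 → ℝ) → ℝ → Mat3)
    (hsmh : ContDiff ℝ (⊤ : ℕ∞) (fun q : (Fin 3 → ℝ) × ℝ => vh q.1 q.2) ∧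
            ContDiff ℝ (⊤ : ℕ∞) (fun q : (Fin 3 → ℝ) × ℝ => Fh q.1 q.2))
    (hgradh : ∃ yh : (Fin 3 → ℝ) → ℝ → Fin 3 → ℝ,
      ContDiff ℝ (⊤ : ℕ∞) (fun q : (Fin 3 → ℝ) × ℝ => yh q.1 q.2) ∧
      ∀ x t i α, Fh x t i α = fderiv ℝ (fun z => yh z t i) x (Pi.single α 1))
    (hheq1 : ∀ x, ∀ t ∈ Set.Icc (0 : ℝ) Tf, ∀ i,
      deriv (fun s => vh x s i) t =
        ∑ α, fderiv ℝ (fun z => ∑ A, pd σE (Phi (Fh z t)) A * dPhi (Fh z t) A i α) x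
          (Pi.single α 1))
    (hheq2 : ∀ x, ∀ t ∈ Set.Icc (0 : ℝ) Tf, ∀ i α,
      deriv (fun s => Fh x s i α) t = fderiv ℝ (fun z => vh z t i) x (Pi.single α 1))
    -- fast decay as |x| → ∞, formalized as uniformly compact support in x
    (hKε : ∀ ε, 0 < ε → ∃ K : Set (Fin 3 → ℝ), IsCompact K ∧
      ∀ t ∈ Set.Icc (0 : ℝ) Tf,
        tsupport (fun x => v ε x t) ⊆ K ∧ tsupport (fun x => Fm ε x t) ⊆ K ∧
        tsupport (fun x => TT ε x t) ⊆ K)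
    (hKh : ∃ K : Set (Fin 3 → ℝ), IsCompact K ∧
      ∀ t ∈ Set.Icc (0 : ℝ) Tf,
        tsupport (fun x => vh x t) ⊆ K ∧ tsupport (fun x => Fh x t) ⊆ K)
    -- the internal variables τ^ε and τ_∞(F̂)
    (tau : ℝ → (Fin 3 → ℝ) → ℝ → Idx19 → ℝ)
    (htau : ∀ ε x t A, tau ε x t A = TT ε x t A - pd σI (Phi (Fm ε x t)) A)
    (tinf : (Fin 3 → ℝ) → ℝ → Idx19 → ℝ)
    (htinf : ∀ x t A, tinf x t A = pd σE (Phi (Fh x t)) A - pd σI (Phi (Fh x t)) A)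
    -- the relative energy e_r
    (er : ℝ → (Fin 3 → ℝ) → ℝ → ℝ)
    (her : ∀ ε x t, er ε x t =
      (1 / 2) * (∑ i, (v ε x t i - vh x t i) ^ 2)
        + Ψ (Phi (Fm ε x t)) (tau ε x t)
        - σE (Phi (Fh x t))
        - ∑ A, pd σE (Phi (Fh x t)) A * (Phi (Fm ε x t) A - Phi (Fh x t) A))
    (hIntEr : ∀ ε, 0 < ε → ∀ t ∈ Set.Icc (0 : ℝ) Tf,
      Integrable (fun x => er ε x t))
    -- uniform bound on the initial energy
    (hE0 : ∃ E0 : ℝ, ∀ ε, 0 < ε →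
      Integrable (fun x =>
        (1 / 2) * (∑ i, (v ε x 0 i) ^ 2) + Ψ (Phi (Fm ε x 0)) (tau ε x 0)) ∧
      (∫ x, ((1 / 2) * (∑ i, (v ε x 0 i) ^ 2) + Ψ (Phi (Fm ε x 0)) (tau ε x 0))) ≤ E0) :
    ∃ C > 0,
      (∀ ε, 0 < ε → ∀ t ∈ Set.Icc (0 : ℝ) Tf,
        (∫ x, er ε x t) ≤ C * ((∫ x, er ε x 0) + ε)) ∧
      (Filter.Tendsto (fun ε => ∫ x, er ε x 0) (nhdsWithin 0 (Set.Ioi 0)) (nhds 0) →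
        ∀ η, 0 < η → ∃ ε₀ > 0, ∀ ε, 0 < ε → ε < ε₀ → ∀ t ∈ Set.Icc (0 : ℝ) Tf,
          (∫ x, ((∑ i, (v ε x t i - vh x t i) ^ 2)
            + (∑ i, ∑ α, (Fm ε x t i α - Fh x t i α) ^ 2)
            + (∑ A, (tau ε x t A - tinf x t A) ^ 2))) ≤ η) := by
  have hEP : EntropyPair γI γv σI σE Sg G :=
    ⟨hσI, hσE, hGsm, hγ, hγv, hSgdef, h1a, h1b, h1c, hGgrad, fun X => by
      rw [← hΨdef]; exact hΨnorm X⟩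
  obtain ⟨κ, hκ, hcoer⟩ := hEP.exists_coercive
  obtain ⟨Kh, hKhc, hKh⟩ := hKh
  set VH : SpT → Fin 3 → ℝ := fun q => vh q.1 q.2
  set FH : SpT → Mat3 := fun q => Fh q.1 q.2
  have cVH : ContDiff ℝ 1 VH := hsmh.1.of_le (by simp)
  have cFH : ContDiff ℝ 1 FH := hsmh.2.of_le (by simp)
  have hKh0 : ∀ t ∈ Set.Icc 0 Tf, ∀ x, x ∉ Kh → VH (x, t) = 0 ∧ FH (x, t) = 0 :=
    fun t ht x hx =>
      ⟨image_eq_zero_of_notMem_tsupport (f := fun x => vh x t) fun h => hx ((hKh t ht).1 h),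
        image_eq_zero_of_notMem_tsupport (f := fun x => Fh x t) fun h => hx ((hKh t ht).2 h)⟩
  obtain ⟨B, hB0, hB⟩ := reference_bounds hσE cVH cFH hKhc hKh0
  -- Only `∇v̂` multiplies the `O(ε)` remainder, so its density is supported in `Kh`.
  set g : (Fin 3 → ℝ) → ℝ :=
    fun x => γv * (171 * Kh.indicator (fun _ => B) x * B) ^ 2 / 4 with hg
  have hg0 : ∀ x, 0 ≤ g x := fun x => by positivity
  have hgint : Integrable g := by
    have e : g = Kh.indicator fun _ => γv * (171 * B * B) ^ 2 / 4 := by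
      funext x
      by_cases hx : x ∈ Kh <;> simp [hg, hx]
    rw [e]
    exact (integrable_indicator_iff hKhc.measurableSet).2
      (integrableOn_const hKhc.measure_lt_top.ne)
  have hI0 : 0 ≤ ∫ x, g x := integral_nonneg hg0
  set C₁ := 171 * (4 * B + M / 2 * B ^ 2 + 4 * M * B) / κ
  have hC₁ : 0 ≤ C₁ := by positivity
  have her' : ∀ ε x t, er ε x t = relEnergy σI σE G (v ε x t) (Phi (Fm ε x t)) (tau ε x t)
      (vh x t) (Phi (Fh x t)) := fun ε x t => by
    rw [her, hΨdef]; rfl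
  have hco : ∀ ε x t, κ * ((∑ i, (v ε x t i - vh x t i) ^ 2)
      + (∑ A, (Phi (Fm ε x t) A - Phi (Fh x t) A) ^ 2)
      + ∑ A, (tau ε x t A + pd σI (Phi (Fm ε x t)) A - pd σE (Phi (Fm ε x t)) A) ^ 2)
      ≤ er ε x t := fun ε x t => by
    rw [her']; exact hcoer _ _ _ _ _
  have her0 : ∀ ε x t, 0 ≤ er ε x t := fun ε x t => le_trans (by positivity) (hco ε x t)
  set C := Real.exp (C₁ * Tf) * (1 + Tf * ∫ x, g x)
  have hC : 0 < C := by positivity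
  have stab : ∀ ε, 0 < ε → ∀ t ∈ Set.Icc (0 : ℝ) Tf,
      (∫ x, er ε x t) ≤ C * ((∫ x, er ε x 0) + ε) := by
    intro ε hε
    obtain ⟨K, hKc, hK⟩ := hKε ε hε
    set V : SpT → Fin 3 → ℝ := fun q => v ε q.1 q.2
    set F : SpT → Mat3 := fun q => Fm ε q.1 q.2
    set S : SpT → Idx19 → ℝ := fun q => TT ε q.1 q.2
    have cV : ContDiff ℝ 1 V := (hsm ε hε).1.of_le (by simp)
    have cF : ContDiff ℝ 1 F := (hsm ε hε).2.1.of_le (by simp)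
    have cS : ContDiff ℝ 1 S := (hsm ε hε).2.2.of_le (by simp)
    have hK0 : ∀ t ∈ Set.Icc 0 Tf, ∀ x, x ∉ K → V (x, t) = 0 ∧ F (x, t) = 0 ∧ S (x, t) = 0 :=
      fun t ht x hx =>
        ⟨image_eq_zero_of_notMem_tsupport (f := fun x => v ε x t) fun h => hx ((hK t ht).1 h),
          image_eq_zero_of_notMem_tsupport (f := fun x => Fm ε x t)
            fun h => hx ((hK t ht).2.1 h),
          image_eq_zero_of_notMem_tsupport (f := fun x => TT ε x t)
            fun h => hx ((hK t ht).2.2 h)⟩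
    have hrest : ∀ A, pd σE (Phi 0) A = 0 := rest_stress (F := F) (S := S) hε hTf hKc
      (fun t ht x hx => (hK0 t ht x hx).2) (heq3 ε hε)
    set e := eDens σI σE G V VH F FH S
    have hee : ∀ x t, e (x, t) = er ε x t := fun x t => by
      rw [her', show tau ε x t = _ from funext (htau ε x t)]; rfl
    obtain ⟨y, hy, hFy⟩ := hgrad ε hε
    obtain ⟨yh, hyh, hFyh⟩ := hgradh
    have main := gronwall_density (e := e) (T := Tf) (C₁ := C₁) (K := K ∪ Kh)
      (flux := eFlux σE V VH F FH S) (g := fun x => ε * g x)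
      (contDiff_eDens hσI hσE hGsm cV cVH cF cFH cS) hTf hC₁ (hKc.union hKhc)
      (fun t ht x hx => by
        simp only [Set.mem_union, not_or] at hx
        obtain ⟨a1, a2, a3⟩ := hK0 t ht x hx.1
        obtain ⟨b1, b2⟩ := hKh0 t ht x hx.2
        simp only [e, eDens, a1, a2, a3, b1, b2]
        exact hEP.relEnergy_eq_zero _ fun A => by simp [hrest])
      (fun t ht x => by rw [hee]; exact her0 ε x t)
      (contDiff_eFlux hσE cV cVH cF cFH cS)
      (fun α t ht x hx => by
        simp only [Set.mem_union, not_or] at hx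
        simp [eFlux, (hK0 t ht x hx.1).1, (hKh0 t ht x hx.2).1])
      (hgint.const_mul ε) (fun x => mul_nonneg hε.le (hg0 x))
      (fun t ht x => by
        have ht' : t ∈ Set.Icc 0 Tf := ⟨ht.1.le, ht.2.le⟩
        obtain ⟨bd1, bd2, bd3⟩ := hB t ht' x
        exact balance hEP hM h2a h2b hκ hcoer cV cVH cF cFH cS hε
          (grad_symm hy (fun x => hFy x t) x) (grad_symm hyh (fun x => hFyh x t) x)
          (heq1 ε hε x t ht') (heq2 ε hε x t ht') (heq3 ε hε x t ht') (hheq1 x t ht')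
          (hheq2 x t ht') hB0 (Set.indicator_le_self' (fun _ _ => hB0) x) bd1 bd2 bd3)
    intro t ht
    have h1 := main t ht
    simp only [hee, integral_const_mul] at h1
    refine h1.trans ?_
    rw [mul_assoc (Real.exp (C₁ * Tf))]
    refine mul_le_mul_of_nonneg_left ?_ (Real.exp_pos _).le
    have h2 : 0 ≤ (∫ x, er ε x 0) * (Tf * ∫ x, g x) :=
      mul_nonneg (integral_nonneg fun x => her0 ε x 0) (by positivity)
    linarith
  refine ⟨C, hC, stab, fun hlim η hη => ?_⟩
  set C' := (2 + 2 * γv ^ 2) / κ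
  have hC' : 0 < C' := by positivity
  set δ := η / (2 * (C' * C))
  have hδ : 0 < δ := by positivity
  have hev := (hlim.eventually (gt_mem_nhds hδ))
  obtain ⟨ε₁, hε₁, hε₁'⟩ := mem_nhdsGT_iff_exists_Ioo_subset.1 hev
  refine ⟨min ε₁ δ, lt_min hε₁ hδ, fun ε hε hlt t ht => ?_⟩
  have hini : (∫ x, er ε x 0) < δ := hε₁' ⟨hε, hlt.trans_le (min_le_left _ _)⟩
  have hεδ : ε < δ := hlt.trans_le (min_le_right _ _)
  have hpt : ∀ x, (∑ i, (v ε x t i - vh x t i) ^ 2)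
      + (∑ i, ∑ α, (Fm ε x t i α - Fh x t i α) ^ 2)
      + (∑ A, (tau ε x t A - tinf x t A) ^ 2) ≤ C' * er ε x t := by
    intro x
    have h1 := hEP.tau_sub_le (Phi (Fm ε x t)) (tau ε x t) (Phi (Fh x t))
    simp only [← htinf] at h1
    have h2 : ∑ i, ∑ α, (Fm ε x t i α - Fh x t i α) ^ 2
        ≤ ∑ A, (Phi (Fm ε x t) A - Phi (Fh x t) A) ^ 2 := by
      rw [Fintype.sum_sum_type, Fintype.sum_prod_type]
      exact le_add_of_nonneg_right (Finset.sum_nonneg fun _ _ => sq_nonneg _)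
    have h3 := hco ε x t
    rw [← le_div_iff₀' hκ] at h3
    have h4 := mul_le_mul_of_nonneg_left h3 (by positivity : 0 ≤ 2 + 2 * γv ^ 2)
    have e1 : (2 + 2 * γv ^ 2) * (er ε x t / κ) = C' * er ε x t := by
      simp only [C']; ring
    rw [e1] at h4
    refine le_trans ?_ h4
    have s1 : 0 ≤ ∑ i, (v ε x t i - vh x t i) ^ 2 := by positivity
    have s2 : 0 ≤ ∑ A, (Phi (Fm ε x t) A - Phi (Fh x t) A) ^ 2 := by positivity
    have s3 : 0 ≤ ∑ A, (tau ε x t A + pd σI (Phi (Fm ε x t)) A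
      - pd σE (Phi (Fm ε x t)) A) ^ 2 := by positivity
    have s4 := mul_nonneg (sq_nonneg γv) s1
    have s5 := mul_nonneg (sq_nonneg γv) s3
    linarith
  calc _ ≤ ∫ x, C' * er ε x t :=
        integral_mono_of_nonneg (Filter.Eventually.of_forall fun x => by positivity)
          ((hIntEr ε hε t ht).const_mul C') (Filter.Eventually.of_forall hpt)
    _ = C' * ∫ x, er ε x t := integral_const_mul _ _
    _ ≤ C' * (C * (δ + δ)) := by
        refine mul_le_mul_of_nonneg_left ((stab ε hε t ht).trans ?_) hC'.le
        exact mul_le_mul_of_nonneg_left (by linarith) hC.le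
    _ = η := by
        simp only [δ]
        field_simp
        ring
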